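/- arXiv:2506.03806 — 7 statements merged into one kernel-verified Lean document; each statement's English description precedes it below -/
import Mathlib

section
/- Let b,d,x ∈ ℂ with x ≠ 0 and b² − d²x² ≠ 0, and set S = [[d,b,0],[b/x²,d,0],[0,0,1]], R = [[0,x,0],[1/x,0,0],[0,0,1]], G₁ = diag(−1,1,1), G₂ = diag(1,−1,1). Then all four matrices are invertible and they satisfy the defining relations of TVB₂: R² = I₃, G₁² = I₃, G₂² = I₃, G₁G₂ = G₂G₁, RG₁ = G₂R, and RSR = G₂G₁SG₁G₂. (Hence the assignment σ₁ ↦ S, ρ₁ ↦ R, γ₁ ↦ G₁, γ₂ ↦ G₂ defines the representation ζ₁ of TVB₂ into GL₃(ℂ).) -/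
/-!
All four matrices are block sums `M ⊕ 1` with `M` of size two, and `M ↦ M ⊕ 1` is multiplicative,
so everything can be checked in size two. There the images of `ρ₁` and `γ₁` are anticommuting
involutions `w` and `g`, the image of `γ₂` is `-g`, and the image of `σ₁` is `s = d + (b / x) w`,
which commutes with `w`. As `γ₁ γ₂` and `γ₂ γ₁` both map to `-1`, the two sides of the last relation
are `w s w = s` and `(-1) s (-1) = s`. Finally, `det s = -(b² - d²x²) / x²`.
-/

/-- The defining relations of the twisted virtual braid group `TVB₂` for the images `σ`, `ρ`, `γ₁`,
`γ₂` of `σ₁`, `ρ₁`, `γ₁`, `γ₂`. They force the last three to be invertible; invertibility of `σ`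
is not included. -/
structure TVB₂Relations {M : Type*} [Monoid M] (σ ρ γ₁ γ₂ : M) : Prop where
  rho_mul_self : ρ * ρ = 1
  gamma₁_mul_self : γ₁ * γ₁ = 1
  gamma₂_mul_self : γ₂ * γ₂ = 1
  gamma_comm : γ₁ * γ₂ = γ₂ * γ₁
  rho_mul_gamma₁ : ρ * γ₁ = γ₂ * ρ
  rho_mul_sigma_mul_rho : ρ * σ * ρ = γ₂ * γ₁ * σ * γ₁ * γ₂

namespace TVB₂Relations

theorem map {M N : Type*} [Monoid M] [Monoid N] {σ ρ γ₁ γ₂ : M}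
    (h : TVB₂Relations σ ρ γ₁ γ₂) (f : M →* N) :
    TVB₂Relations (f σ) (f ρ) (f γ₁) (f γ₂) where
  rho_mul_self := by rw [← map_mul, h.rho_mul_self, map_one]
  gamma₁_mul_self := by rw [← map_mul, h.gamma₁_mul_self, map_one]
  gamma₂_mul_self := by rw [← map_mul, h.gamma₂_mul_self, map_one]
  gamma_comm := by rw [← map_mul, h.gamma_comm, map_mul]
  rho_mul_gamma₁ := by rw [← map_mul, h.rho_mul_gamma₁, map_mul]
  rho_mul_sigma_mul_rho := by simp only [← map_mul, h.rho_mul_sigma_mul_rho]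

theorem of_anticommuting_involutions {A : Type*} [Ring A] {s w g : A}
    (hw : w * w = 1) (hg : g * g = 1) (hwg : w * g = -(g * w)) (hsw : Commute s w) :
    TVB₂Relations s w g (-g) where
  rho_mul_self := hw
  gamma₁_mul_self := hg
  gamma₂_mul_self := by rw [neg_mul_neg, hg]
  gamma_comm := by rw [mul_neg, neg_mul]
  rho_mul_gamma₁ := by rw [hwg, neg_mul]
  rho_mul_sigma_mul_rho := calc
    w * s * w = s := by rw [← hsw.eq, mul_assoc, hw, mul_one]
    _ = -g * g * s * (g * -g) := by simp only [neg_mul, mul_neg, hg, one_mul, mul_one, neg_neg]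
    _ = -g * g * s * g * -g := (mul_assoc _ _ _).symm

end TVB₂Relations

/-- The stabilization `M ↦ M ⊕ 1` from `n × n` to `(n + 1) × (n + 1)` matrices, with the new basis
vector placed last. -/
def stabilizationHom (n : ℕ) (R : Type*) [Semiring R] :
    Matrix (Fin n) (Fin n) R →* Matrix (Fin (n + 1)) (Fin (n + 1)) R where
  toFun M := Matrix.reindexRingEquiv R finSumFinEquiv
    (Matrix.fromBlocks M 0 0 (1 : Matrix (Fin 1) (Fin 1) R))
  map_one' := by rw [Matrix.fromBlocks_one, map_one]
  map_mul' M N := by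
    rw [← map_mul, Matrix.fromBlocks_multiply]
    simp only [Matrix.mul_zero, Matrix.zero_mul, add_zero, zero_add, Matrix.one_mul]

theorem stabilizationHom_fin_two {R : Type*} [Semiring R] (p q r s : R) :
    stabilizationHom 2 R !![p, q; r, s] = !![p, q, 0; r, s, 0; 0, 0, 1] := by
  ext i j
  fin_cases i <;> fin_cases j <;> rfl

theorem antidiagonal_mul_self_eq_one {R : Type*} [Semiring R] {p q : R} (hpq : p * q = 1)
    (hqp : q * p = 1) : !![0, p; q, 0] * !![0, p; q, 0] = 1 := by
  simp [Matrix.one_fin_two, hpq, hqp]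

theorem commute_antidiagonal {R : Type*} [CommSemiring R] {a c p q : R} (d : R)
    (h : a * q = p * c) : Commute !![d, a; c, d] !![0, p; q, 0] := by
  simp [Commute, SemiconjBy, h, mul_comm]

theorem TVB₂Relations.fin_two {R : Type*} [CommRing R] {a c p q : R} (d : R) (hpq : p * q = 1)
    (h : a * q = p * c) :
    TVB₂Relations !![d, a; c, d] !![0, p; q, 0] !![-1, 0; 0, 1] !![1, 0; 0, -1] := by
  have hw := antidiagonal_mul_self_eq_one hpq (mul_comm p q ▸ hpq)
  have hg : !![(-1 : R), 0; 0, 1] * !![-1, 0; 0, 1] = 1 := by simp [Matrix.one_fin_two]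
  have hwg : !![0, p; q, 0] * !![-1, 0; 0, 1] = -(!![-1, 0; 0, 1] * !![0, p; q, 0]) := by simp
  have hneg : !![(1 : R), 0; 0, -1] = -!![-1, 0; 0, 1] := by simp
  rw [hneg]
  exact .of_anticommuting_involutions hw hg hwg (commute_antidiagonal d h)

theorem stmt_2_general {K : Type*} [Field K] (b d x : K) (hx : x ≠ 0)
    (hbd : b ^ 2 - d ^ 2 * x ^ 2 ≠ 0) (S R G₁ G₂ : Matrix (Fin 3) (Fin 3) K)
    (hS : S = !![d, b, 0; b / x ^ 2, d, 0; 0, 0, 1])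
    (hR : R = !![0, x, 0; 1 / x, 0, 0; 0, 0, 1])
    (hG₁ : G₁ = !![(-1 : K), 0, 0; 0, 1, 0; 0, 0, 1])
    (hG₂ : G₂ = !![(1 : K), 0, 0; 0, -1, 0; 0, 0, 1]) :
    IsUnit S ∧ IsUnit R ∧ IsUnit G₁ ∧ IsUnit G₂ ∧
    R * R = 1 ∧ G₁ * G₁ = 1 ∧ G₂ * G₂ = 1 ∧
    G₁ * G₂ = G₂ * G₁ ∧ R * G₁ = G₂ * R ∧
    R * S * R = G₂ * G₁ * S * G₁ * G₂ := by
  have hdet : d * d - b * (b / x ^ 2) ≠ 0 := by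
    have hfrac : d * d - b * (b / x ^ 2) = -(b ^ 2 - d ^ 2 * x ^ 2) / x ^ 2 := by
      field_simp
      ring
    rw [hfrac]
    exact div_ne_zero (neg_ne_zero.mpr hbd) (pow_ne_zero 2 hx)
  have hS_unit : IsUnit S := by
    rw [hS, ← stabilizationHom_fin_two]
    refine IsUnit.map _ ?_
    rw [Matrix.isUnit_iff_isUnit_det, Matrix.det_fin_two_of]
    exact hdet.isUnit
  have h : TVB₂Relations S R G₁ G₂ := by
    have hcomm : b * (1 / x) = x * (b / x ^ 2) := by field_simp
    simp only [hS, hR, hG₁, hG₂, ← stabilizationHom_fin_two]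
    exact (TVB₂Relations.fin_two d (mul_one_div_cancel hx) hcomm).map _
  exact ⟨hS_unit, .of_mul_eq_one _ h.rho_mul_self, .of_mul_eq_one _ h.gamma₁_mul_self,
    .of_mul_eq_one _ h.gamma₂_mul_self, h.rho_mul_self, h.gamma₁_mul_self, h.gamma₂_mul_self,
    h.gamma_comm, h.rho_mul_gamma₁, h.rho_mul_sigma_mul_rho⟩

/-- The assignment defining the representation ζ₁ of TVB₂: the given matrices are
invertible and satisfy the defining relations of TVB₂. -/
theorem stmt_2 (b d x : ℂ) (hx : x ≠ 0) (hbd : b ^ 2 - d ^ 2 * x ^ 2 ≠ 0)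
    (S R G₁ G₂ : Matrix (Fin 3) (Fin 3) ℂ)
    (hS : S = !![d, b, 0; b / x ^ 2, d, 0; 0, 0, 1])
    (hR : R = !![0, x, 0; 1 / x, 0, 0; 0, 0, 1])
    (hG₁ : G₁ = !![(-1 : ℂ), 0, 0; 0, 1, 0; 0, 0, 1])
    (hG₂ : G₂ = !![(1 : ℂ), 0, 0; 0, -1, 0; 0, 0, 1]) :
    IsUnit S ∧ IsUnit R ∧ IsUnit G₁ ∧ IsUnit G₂ ∧
    R * R = 1 ∧ G₁ * G₁ = 1 ∧ G₂ * G₂ = 1 ∧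
    G₁ * G₂ = G₂ * G₁ ∧ R * G₁ = G₂ * R ∧
    R * S * R = G₂ * G₁ * S * G₁ * G₂ :=
  stmt_2_general b d x hx hbd S R G₁ G₂ hS hR hG₁ hG₂
end

section
/- Let b,d,x ∈ ℂ with x ≠ 0. Then there is no nonzero vector v ∈ ℂ² that is a simultaneous eigenvector of the four 2×2 complex matrices [[d,b],[b/x²,d]], [[0,x],[1/x,0]], [[−1,0],[0,1]], and [[1,0],[0,−1]]. (These are the 2×2 composition factors of the images of σ₁, ρ₁, γ₁, γ₂ under the representation ζ₁ of TVB₂; hence ζ₁ is reducible to degree 2 but not further reducible to degree 1.) -/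
/-!
An eigenvector of a diagonal matrix with distinct diagonal entries is a multiple of a standard
basis vector `eᵢ`, and such a multiple is an eigenvector of `M` only if the `i`-th column of `M`
vanishes off the diagonal. The common eigenvectors of the images of `γ₁` and `ρ₁` are excluded
in this way: the first would put them on a coordinate axis, and the second swaps the two axes.
-/

section CommonEigenvector

open Matrix

variable {n R : Type*} [Fintype n] [DecidableEq n] [Ring R] [NoZeroDivisors R]

theorem eq_of_diagonal_mulVec_eq_smul {d v : n → R} {l : R} (h : diagonal d *ᵥ v = l • v)
    {i : n} (hi : v i ≠ 0) : d i = l := by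
  have hmul : d i * v i = l * v i := by
    simpa only [mulVec_diagonal, Pi.smul_apply, smul_eq_mul] using congrFun h i
  exact mul_right_cancel₀ hi hmul

theorem exists_eq_single_of_diagonal_mulVec_eq_smul {d v : n → R} {l : R}
    (hd : Function.Injective d) (hv : v ≠ 0) (h : diagonal d *ᵥ v = l • v) :
    ∃ i a, a ≠ 0 ∧ v = Pi.single i a := by
  obtain ⟨i, hi⟩ := Function.ne_iff.mp hv
  refine ⟨i, v i, hi, funext fun j => ?_⟩
  rcases eq_or_ne j i with rfl | hji
  · rw [Pi.single_eq_same]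
  · rw [Pi.single_eq_of_ne hji]
    by_contra hj
    have hdji : d j = d i :=
      (eq_of_diagonal_mulVec_eq_smul h hj).trans (eq_of_diagonal_mulVec_eq_smul h hi).symm
    exact hji (hd hdji)

theorem apply_eq_zero_of_mulVec_single_eq_smul {M : Matrix n n R} {i j : n} {a l : R}
    (ha : a ≠ 0) (h : M *ᵥ Pi.single i a = l • Pi.single i a) (hji : j ≠ i) : M j i = 0 := by
  have hmul : M j i * a = 0 := by simpa [hji] using congrFun h j
  exact (mul_eq_zero.mp hmul).resolve_right ha

theorem stmt_6_general {d : n → R} {M : Matrix n n R} (hd : Function.Injective d)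
    (hM : ∀ i, ∃ j ≠ i, M j i ≠ 0) :
    ¬ ∃ v : n → R, v ≠ 0 ∧ (∃ l : R, M *ᵥ v = l • v) ∧ ∃ l : R, diagonal d *ᵥ v = l • v := by
  rintro ⟨v, hv, ⟨l, hl⟩, m, hm⟩
  obtain ⟨i, a, ha, rfl⟩ := exists_eq_single_of_diagonal_mulVec_eq_smul hd hv hm
  obtain ⟨j, hji, hMji⟩ := hM i
  exact hMji (apply_eq_zero_of_mulVec_single_eq_smul ha hl hji)

end CommonEigenvector

/-- The 2×2 composition factors of the images of σ₁, ρ₁, γ₁, γ₂ under ζ₁ have no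
common eigenvector, so ζ₁ is not further reducible to degree 1. -/
theorem stmt_6 (b d x : ℂ) (hx : x ≠ 0) :
    ¬ ∃ v : Fin 2 → ℂ, v ≠ 0 ∧
      (∃ l : ℂ, (!![d, b; b / x ^ 2, d]).mulVec v = l • v) ∧
      (∃ l : ℂ, (!![0, x; 1 / x, 0]).mulVec v = l • v) ∧
      (∃ l : ℂ, (!![(-1 : ℂ), 0; 0, 1]).mulVec v = l • v) ∧
      (∃ l : ℂ, (!![(1 : ℂ), 0; 0, -1]).mulVec v = l • v) := by
  rintro ⟨v, hv, -, hρ, hγ, -⟩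
  have hd : Function.Injective ![(-1 : ℂ), 1] := by
    norm_num [Function.Injective, Fin.forall_fin_two]
  have hM : ∀ i, ∃ j ≠ i, !![0, x; 1 / x, 0] j i ≠ 0 := by
    simp [Fin.forall_fin_two, hx]
  exact stmt_6_general hd hM ⟨v, hv, hρ, by rwa [Matrix.diagonal_vec2]⟩
end

section
/- Fix n ≥ 3. For a 2×2 complex matrix M and 1 ≤ i ≤ n, let Lᵢ(M) denote the (n+1)×(n+1) complex matrix that agrees with the identity everywhere except that its 2×2 submatrix in rows and columns i, i+1 equals M. Let S, R, G be invertible 2×2 complex matrices and suppose the matrices σᵢ = Lᵢ(S), ρᵢ = Lᵢ(R) (1 ≤ i ≤ n−1) and γⱼ = Lⱼ(G) (1 ≤ j ≤ n) satisfy all defining relations of TVBₙ: σᵢσᵢ₊₁σᵢ = σᵢ₊₁σᵢσᵢ₊₁; σᵢσⱼ = σⱼσᵢ for |i−j| ≥ 2; ρᵢ² = I; ρᵢρⱼ = ρⱼρᵢ for |i−j| ≥ 2; ρᵢρᵢ₊₁ρᵢ = ρᵢ₊₁ρᵢρᵢ₊₁; σᵢρⱼ = ρⱼσᵢ for |i−j|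 ≥ 2; ρᵢρᵢ₊₁σᵢ = σᵢ₊₁ρᵢρᵢ₊₁; γⱼ² = I; γᵢγⱼ = γⱼγᵢ; γⱼρᵢ = ρᵢγⱼ and γⱼσᵢ = σᵢγⱼ for |i−j| ≥ 2; ρᵢγᵢ = γᵢ₊₁ρᵢ; ρᵢσᵢρᵢ = γᵢ₊₁γᵢσᵢγᵢγᵢ₊₁. Then one of the following seven cases holds: (1) there exist nonzero b,c,r ∈ ℂ with r² = b/c such that S = [[0,b],[c,0]], R = [[0,−r],[−1/r,0]], G = diag(−1,1); (2) there exist nonzero b,c,r ∈ ℂ with r² = b/c such that S = [[0,b],[c,0]], R = [[0,r],[1/r,0]], G = diag(−1,1); (3) there exist nonzero b,c,r ∈ ℂ with r² = b/c such that S = [[0,b],[c,0]], R = [[0,−r],[−1/r,0]], G = I₂; (4) there exist nonzero b,c,r ∈ ℂ with r² = b/c such that S = [[0,b],[c,0]], R = [[0,r],[1/r,0]], G = I₂; (5) there exists nonzero x ∈ ℂ such that S = I₂, R = [[0,x],[1/x,0]], G = diag(−1,1); (6) there exists nonzero x ∈ ℂ such that S = I₂, R = [[0,x],[1/x,0]],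 G = I₂; (7) S = R = I₂ and G = I₂. -/
/-!
The relations with indices 1 and 2 live in the top left 3×3 corner, and they already force the
claim, over any field.

Commutation of `γ₁` and `γ₂` makes `G` diagonal; `γ₁² = 1` and `ρ₁γ₁ = γ₂ρ₁` then leave
`G = diag(g, 1)` with `g² = 1`, and `g = 1` unless `R₁₁ = 0`. A block satisfying the braid relation
is `1` or has a zero on its diagonal. For `R` the involution gives `R₁₁² = R₂₂²`, so `R = 1` or `R`
is antidiagonal. If `R = 1`, the mixed relation reads `σ₁ = σ₂`, hence `S = 1`. If `R` is
antidiagonal, note that `γ₂γ₁ = diag(g, g, 1)` commutes with `σ₁`, so the last relation says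
`RSR = S`: the diagonal entries of `S` agree, and by the braid relation `S = 1` or `S` is
antidiagonal.

Cases (1) and (3) are (2) and (4) with `r` replaced by `-r`, so five cases suffice.
-/

/-- `localBlock n i M` is the (n+1)×(n+1) complex matrix agreeing with the identity
except that its 2×2 submatrix in (1-indexed) rows and columns i, i+1 equals `M`. -/
def localBlock (n : ℕ) (i : ℕ) (M : Matrix (Fin 2) (Fin 2) ℂ) :
    Matrix (Fin (n + 1)) (Fin (n + 1)) ℂ :=
  Matrix.of fun r s =>
    if r.val + 1 = i ∧ s.val + 1 = i then M 0 0
    else if r.val + 1 = i ∧ s.val = i then M 0 1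
    else if r.val = i ∧ s.val + 1 = i then M 1 0
    else if r.val = i ∧ s.val = i then M 1 1
    else if r = s then 1 else 0

/-- The local block matrix `Lᵢ(M)` over arbitrary coefficients, with `i` counted from 1 as in
`localBlock`, to which it unfolds over `ℂ`. -/
def blockAt {K : Type*} [Zero K] [One K] (n i : ℕ) (M : Matrix (Fin 2) (Fin 2) K) :
    Matrix (Fin (n + 1)) (Fin (n + 1)) K :=
  Matrix.of fun r s =>
    if r.val + 1 = i ∧ s.val + 1 = i then M 0 0
    else if r.val + 1 = i ∧ s.val = i then M 0 1
    else if r.val = i ∧ s.val + 1 = i then M 1 0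
    else if r.val = i ∧ s.val = i then M 1 1
    else if r = s then 1 else 0

section Stabilization

variable {K : Type*} [Semiring K] {m n : ℕ}

/-- The splitting of `n + 1` coordinates into the first `m + 1` and the remaining ones. -/
def coordSplit (h : m ≤ n) : Fin (m + 1) ⊕ Fin (n - m) ≃ Fin (n + 1) :=
  finSumFinEquiv.trans (finCongr (by omega))

lemma val_coordSplit_inl (h : m ≤ n) (r : Fin (m + 1)) : (coordSplit h (.inl r)).val = r := by
  simp [coordSplit]

lemma val_coordSplit_inr (h : m ≤ n) (r : Fin (n - m)) :
    (coordSplit h (.inr r)).val = m + 1 + r := by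
  simp [coordSplit]

/-- The stabilization homomorphism `A ↦ diag(A, 1, …, 1)`, through which the relations
with indices 1 and 2 descend to 3×3 matrices. -/
def stabilize (h : m ≤ n) :
    Matrix (Fin (m + 1)) (Fin (m + 1)) K →* Matrix (Fin (n + 1)) (Fin (n + 1)) K where
  toFun A := Matrix.reindex (coordSplit h) (coordSplit h) (Matrix.fromBlocks A 0 0 1)
  map_one' := by rw [Matrix.fromBlocks_one, Matrix.reindex_apply, Matrix.submatrix_one_equiv]
  map_mul' A B := by
    simp only [Matrix.reindex_apply, Matrix.submatrix_mul_equiv, Matrix.fromBlocks_multiply,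
      Matrix.mul_zero, Matrix.zero_mul, Matrix.mul_one, add_zero, zero_add]

lemma stabilize_apply_coordSplit (h : m ≤ n) (A : Matrix (Fin (m + 1)) (Fin (m + 1)) K)
    (x y : Fin (m + 1) ⊕ Fin (n - m)) :
    stabilize h A (coordSplit h x) (coordSplit h y) = Matrix.fromBlocks A 0 0 1 x y := by
  simp [stabilize]

lemma stabilize_injective (h : m ≤ n) : Function.Injective (stabilize (K := K) h) :=
  fun _ _ hAB => (Matrix.fromBlocks_inj.mp ((Matrix.reindex _ _).injective hAB)).1

lemma stabilize_blockAt (h : m ≤ n) {i : ℕ} (hi : i ≤ m) (M : Matrix (Fin 2) (Fin 2) K) :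
    stabilize h (blockAt m i M) = blockAt n i M := by
  ext r s
  obtain ⟨r, rfl⟩ := (coordSplit h).surjective r
  obtain ⟨s, rfl⟩ := (coordSplit h).surjective s
  rw [stabilize_apply_coordSplit]
  rcases r with r | r <;> rcases s with s | s <;>
    simp only [blockAt, Matrix.fromBlocks_apply₁₁, Matrix.fromBlocks_apply₁₂,
      Matrix.fromBlocks_apply₂₁, Matrix.fromBlocks_apply₂₂, Matrix.of_apply, Matrix.zero_apply,
      Matrix.one_apply, Fin.ext_iff, val_coordSplit_inl, val_coordSplit_inr] <;>
    grind

end Stabilization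

section Blocks

variable {K : Type*}

lemma blockAt_one [Zero K] [One K] (n i : ℕ) : blockAt n i (1 : Matrix (Fin 2) (Fin 2) K) = 1 := by
  ext r s
  simp only [blockAt, Matrix.of_apply, Matrix.one_apply, Fin.ext_iff]
  grind

lemma blockAt_one_one [Zero K] [One K] (M : Matrix (Fin 2) (Fin 2) K) : blockAt 1 1 M = M := by
  ext r s
  fin_cases r <;> fin_cases s <;> simp [blockAt]

lemma blockAt_two_one [Zero K] [One K] (M : Matrix (Fin 2) (Fin 2) K) :
    blockAt 2 1 M = !![M 0 0, M 0 1, 0; M 1 0, M 1 1, 0; 0, 0, 1] := by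
  ext r s
  fin_cases r <;> fin_cases s <;> simp [blockAt]

lemma blockAt_two_two [Zero K] [One K] (M : Matrix (Fin 2) (Fin 2) K) :
    blockAt 2 2 M = !![1, 0, 0; 0, M 0 0, M 0 1; 0, M 1 0, M 1 1] := by
  ext r s
  fin_cases r <;> fin_cases s <;> simp [blockAt]

lemma stabilize_one_two [Semiring K] (M : Matrix (Fin 2) (Fin 2) K) :
    stabilize one_le_two M = blockAt 2 1 M := by
  rw [← stabilize_blockAt one_le_two le_rfl, blockAt_one_one]

lemma blockAt_two_one_mul [Semiring K] (M N : Matrix (Fin 2) (Fin 2) K) :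
    blockAt 2 1 (M * N) = blockAt 2 1 M * blockAt 2 1 N := by
  simp only [← stabilize_one_two, map_mul]

lemma blockAt_two_one_injective [Semiring K] :
    Function.Injective (blockAt 2 1 : Matrix (Fin 2) (Fin 2) K → _) := fun M N h =>
  stabilize_injective one_le_two (by simpa only [stabilize_one_two] using h)

lemma mul_self_eq_one_of_blockAt_two_one [Semiring K] {M : Matrix (Fin 2) (Fin 2) K}
    (h : blockAt 2 1 M * blockAt 2 1 M = 1) : M * M = 1 :=
  blockAt_two_one_injective (by rw [blockAt_two_one_mul, h, blockAt_one])

lemma eq_one_of_blockAt_two_one_eq_blockAt_two_two [Zero K] [One K]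
    {M : Matrix (Fin 2) (Fin 2) K} (h : blockAt 2 1 M = blockAt 2 2 M) : M = 1 := by
  simp only [blockAt_two_one, blockAt_two_two] at h
  have h00 : M 0 0 = 1 := congr($h 0 0)
  have h01 : M 0 1 = 0 := congr($h 0 1)
  have h10 : M 1 0 = 0 := congr($h 1 0)
  have h11 : 1 = M 1 1 := congr($h 2 2)
  rw [Matrix.eta_fin_two M, h00, h01, h10, ← h11, Matrix.one_fin_two]

end Blocks

section TwistRelations

variable {K : Type*} [Semiring K]

lemma offDiag_eq_zero_of_commute_blockAt [IsReduced K] {M : Matrix (Fin 2) (Fin 2) K}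
    (h : blockAt 2 1 M * blockAt 2 2 M = blockAt 2 2 M * blockAt 2 1 M) :
    M 0 1 = 0 ∧ M 1 0 = 0 := by
  simp only [blockAt_two_one, blockAt_two_two] at h
  constructor
  · simpa [Matrix.mul_apply, Fin.sum_univ_succ, ← sq] using congr($h 0 2)
  · simpa [Matrix.mul_apply, Fin.sum_univ_succ, ← sq] using congr($h.symm 2 0)

lemma exists_eq_diag_of_twist_relations [IsReduced K] {R G : Matrix (Fin 2) (Fin 2) K}
    (hG : G * G = 1)
    (hcomm : blockAt 2 1 G * blockAt 2 2 G = blockAt 2 2 G * blockAt 2 1 G)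
    (hRG : blockAt 2 1 R * blockAt 2 1 G = blockAt 2 2 G * blockAt 2 1 R) :
    ∃ g, g * g = 1 ∧ R 0 0 * g = R 0 0 ∧ G = !![g, 0; 0, 1] := by
  obtain ⟨h01, h10⟩ := offDiag_eq_zero_of_commute_blockAt hcomm
  simp only [blockAt_two_one, blockAt_two_two] at hRG
  refine ⟨G 0 0, ?_, ?_, ?_⟩
  · simpa [Matrix.mul_apply, h01] using congr($hG 0 0)
  · simpa [Matrix.mul_apply, Fin.sum_univ_succ, h10] using congr($hRG 0 0)
  · have h11 : 1 = G 1 1 := by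
      simpa [Matrix.mul_apply, Fin.sum_univ_succ] using congr($hRG 2 2)
    rw [Matrix.eta_fin_two G, h01, h10, ← h11]
    rfl

lemma blockAt_two_two_mul_blockAt_two_one_diag (g : K) :
    blockAt 2 2 !![g, 0; 0, 1] * blockAt 2 1 !![g, 0; 0, 1] =
      blockAt 2 1 (Matrix.scalar (Fin 2) g) := by
  simp [blockAt_two_one, blockAt_two_two]

lemma blockAt_two_one_mul_blockAt_two_two_diag (g : K) :
    blockAt 2 1 !![g, 0; 0, 1] * blockAt 2 2 !![g, 0; 0, 1] =
      blockAt 2 1 (Matrix.scalar (Fin 2) g) := by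
  simp [blockAt_two_one, blockAt_two_two]

end TwistRelations

lemma mul_mul_eq_of_twisted_conj {K : Type*} [CommSemiring K]
    {R S : Matrix (Fin 2) (Fin 2) K} {g : K} (hg : g * g = 1)
    (h : blockAt 2 1 R * blockAt 2 1 S * blockAt 2 1 R =
      blockAt 2 2 !![g, 0; 0, 1] * blockAt 2 1 !![g, 0; 0, 1] * blockAt 2 1 S *
        blockAt 2 1 !![g, 0; 0, 1] * blockAt 2 2 !![g, 0; 0, 1]) :
    R * S * R = S := by
  rw [blockAt_two_two_mul_blockAt_two_one_diag, mul_assoc _ (blockAt 2 1 !![g, 0; 0, 1]),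
    blockAt_two_one_mul_blockAt_two_two_diag] at h
  simp only [← blockAt_two_one_mul] at h
  calc R * S * R
      = Matrix.scalar (Fin 2) g * S * Matrix.scalar (Fin 2) g := blockAt_two_one_injective h
    _ = S * Matrix.scalar (Fin 2) (g * g) := by
      rw [(Matrix.scalar_commute g (Commute.all g) S).eq, mul_assoc, ← map_mul]
    _ = S := by rw [hg, map_one, mul_one]

section BraidRelations

variable {K : Type*} [CommRing K]

lemma eq_one_or_diag_mul_eq_zero_of_braid [NoZeroDivisors K] {M : Matrix (Fin 2) (Fin 2) K}
    (h : blockAt 2 1 M * blockAt 2 2 M * blockAt 2 1 M =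
      blockAt 2 2 M * blockAt 2 1 M * blockAt 2 2 M) :
    M = 1 ∨ M 0 0 * M 1 1 = 0 := by
  simp only [blockAt_two_one, blockAt_two_two] at h
  rw [or_iff_not_imp_right, mul_eq_zero, not_or]
  rintro ⟨h0, h1⟩
  have h01 : M 0 1 = 0 := by
    simpa [Matrix.mul_apply, Fin.sum_univ_succ, mul_comm, h0, h1] using congr($h 0 1)
  have h10 : M 1 0 = 0 := by
    simpa [Matrix.mul_apply, Fin.sum_univ_succ, mul_comm, h0, h1] using congr($h 1 0)
  have h00 : M 0 0 = 1 := by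
    simpa [Matrix.mul_apply, Fin.sum_univ_succ, h01, h0] using congr($h 0 0)
  have h11 : M 1 1 = 1 := by
    simpa [Matrix.mul_apply, Fin.sum_univ_succ, h01, h1] using congr($h 2 2)
  rw [Matrix.eta_fin_two M, h00, h01, h10, h11, Matrix.one_fin_two]

lemma eq_one_or_antidiag_of_involution_of_braid [NoZeroDivisors K] {R : Matrix (Fin 2) (Fin 2) K}
    (hR : R * R = 1)
    (hbraid : blockAt 2 1 R * blockAt 2 2 R * blockAt 2 1 R =
      blockAt 2 2 R * blockAt 2 1 R * blockAt 2 2 R) :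
    R = 1 ∨ ∃ q r, q * r = 1 ∧ R = !![0, q; r, 0] := by
  refine (eq_one_or_diag_mul_eq_zero_of_braid hbraid).imp_right fun hdiag => ?_
  have h00 : R 0 0 * R 0 0 + R 0 1 * R 1 0 = 1 := by
    simpa [Matrix.mul_apply] using congr($hR 0 0)
  have h11 : R 1 0 * R 0 1 + R 1 1 * R 1 1 = 1 := by
    simpa [Matrix.mul_apply] using congr($hR 1 1)
  have hsq : R 0 0 ^ 2 = R 1 1 ^ 2 := by linear_combination h00 - h11
  have h0 : R 0 0 = 0 := by
    rcases mul_eq_zero.mp hdiag with h | h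
    · exact h
    · simpa [h] using hsq
  have h1 : R 1 1 = 0 := by simpa [h0] using hsq.symm
  refine ⟨R 0 1, R 1 0, by simpa [h0] using h00, ?_⟩
  rw [Matrix.eta_fin_two R, h0, h1]
  rfl

lemma entries_eq_of_antidiag_conj {S : Matrix (Fin 2) (Fin 2) K} {q r : K} (hqr : q * r = 1)
    (h : !![0, q; r, 0] * S * !![0, q; r, 0] = S) :
    S 0 0 = S 1 1 ∧ S 0 1 = q ^ 2 * S 1 0 := by
  rw [Matrix.eta_fin_two S] at h
  have h00 : q * S 1 1 * r = S 0 0 := by simpa using congr($h 0 0)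
  have h01 : q * S 1 0 * q = S 0 1 := by simpa using congr($h 0 1)
  exact ⟨by linear_combination S 1 1 * hqr - h00, by linear_combination -h01⟩

lemma eq_one_or_antidiag_of_antidiag_conj_of_braid [NoZeroDivisors K] {S : Matrix (Fin 2) (Fin 2) K}
    {q r : K} (hqr : q * r = 1) (hconj : !![0, q; r, 0] * S * !![0, q; r, 0] = S)
    (hbraid : blockAt 2 1 S * blockAt 2 2 S * blockAt 2 1 S =
      blockAt 2 2 S * blockAt 2 1 S * blockAt 2 2 S) :
    S = 1 ∨ ∃ c, S = !![0, q ^ 2 * c; c, 0] := by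
  obtain ⟨hdiag, hoff⟩ := entries_eq_of_antidiag_conj hqr hconj
  refine (eq_one_or_diag_mul_eq_zero_of_braid hbraid).imp_right fun h => ⟨S 1 0, ?_⟩
  have h1 : S 1 1 = 0 := by simpa [hdiag] using h
  rw [Matrix.eta_fin_two S, hdiag, hoff, h1]
  rfl

theorem blocks_classification [NoZeroDivisors K] {S R G : Matrix (Fin 2) (Fin 2) K}
    (hσ : blockAt 2 1 S * blockAt 2 2 S * blockAt 2 1 S =
      blockAt 2 2 S * blockAt 2 1 S * blockAt 2 2 S)
    (hρ : blockAt 2 1 R * blockAt 2 1 R = 1)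
    (hρρ : blockAt 2 1 R * blockAt 2 2 R * blockAt 2 1 R =
      blockAt 2 2 R * blockAt 2 1 R * blockAt 2 2 R)
    (hρσ : blockAt 2 1 R * blockAt 2 2 R * blockAt 2 1 S =
      blockAt 2 2 S * blockAt 2 1 R * blockAt 2 2 R)
    (hγ : blockAt 2 1 G * blockAt 2 1 G = 1)
    (hγγ : blockAt 2 1 G * blockAt 2 2 G = blockAt 2 2 G * blockAt 2 1 G)
    (hργ : blockAt 2 1 R * blockAt 2 1 G = blockAt 2 2 G * blockAt 2 1 R)
    (hρσρ : blockAt 2 1 R * blockAt 2 1 S * blockAt 2 1 R =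
      blockAt 2 2 G * blockAt 2 1 G * blockAt 2 1 S * blockAt 2 1 G * blockAt 2 2 G) :
    (S = 1 ∧ R = 1 ∧ G = 1) ∨
      ∃ q r, q * r = 1 ∧ R = !![0, q; r, 0] ∧
        (S = 1 ∨ ∃ c, S = !![0, q ^ 2 * c; c, 0]) ∧
        (G = 1 ∨ G = !![-1, 0; 0, 1]) := by
  obtain ⟨g, hg, hRg, rfl⟩ :=
    exists_eq_diag_of_twist_relations (mul_self_eq_one_of_blockAt_two_one hγ) hγγ hργ
  rcases eq_one_or_antidiag_of_involution_of_braid (mul_self_eq_one_of_blockAt_two_one hρ) hρρ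
    with rfl | ⟨q, r, hqr, rfl⟩
  · obtain rfl : g = 1 := by simpa using hRg
    have hS : blockAt 2 1 S = blockAt 2 2 S := by simpa [blockAt_one] using hρσ
    exact .inl ⟨eq_one_of_blockAt_two_one_eq_blockAt_two_two hS, rfl, Matrix.one_fin_two.symm⟩
  · refine .inr ⟨q, r, hqr, rfl, ?_, ?_⟩
    · exact eq_one_or_antidiag_of_antidiag_conj_of_braid hqr
        (mul_mul_eq_of_twisted_conj hg hρσρ) hσ
    · rcases mul_self_eq_one_iff.mp hg with rfl | rfl
      · exact .inl Matrix.one_fin_two.symm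
      · exact .inr rfl

end BraidRelations

theorem stmt_8_general {K : Type*} [Field K] {n : ℕ} (hn : 2 ≤ n)
    {S R G : Matrix (Fin 2) (Fin 2) K} (hS : IsUnit S)
    (hσ : blockAt n 1 S * blockAt n 2 S * blockAt n 1 S =
      blockAt n 2 S * blockAt n 1 S * blockAt n 2 S)
    (hρ : blockAt n 1 R * blockAt n 1 R = 1)
    (hρρ : blockAt n 1 R * blockAt n 2 R * blockAt n 1 R =
      blockAt n 2 R * blockAt n 1 R * blockAt n 2 R)
    (hρσ : blockAt n 1 R * blockAt n 2 R * blockAt n 1 S =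
      blockAt n 2 S * blockAt n 1 R * blockAt n 2 R)
    (hγ : blockAt n 1 G * blockAt n 1 G = 1)
    (hγγ : blockAt n 1 G * blockAt n 2 G = blockAt n 2 G * blockAt n 1 G)
    (hργ : blockAt n 1 R * blockAt n 1 G = blockAt n 2 G * blockAt n 1 R)
    (hρσρ : blockAt n 1 R * blockAt n 1 S * blockAt n 1 R =
      blockAt n 2 G * blockAt n 1 G * blockAt n 1 S * blockAt n 1 G * blockAt n 2 G) :
    (∃ b c r : K, b ≠ 0 ∧ c ≠ 0 ∧ r ≠ 0 ∧ r ^ 2 = b / c ∧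
      S = !![0, b; c, 0] ∧ R = !![0, r; 1 / r, 0] ∧ G = !![-1, 0; 0, 1]) ∨
    (∃ b c r : K, b ≠ 0 ∧ c ≠ 0 ∧ r ≠ 0 ∧ r ^ 2 = b / c ∧
      S = !![0, b; c, 0] ∧ R = !![0, r; 1 / r, 0] ∧ G = 1) ∨
    (∃ x : K, x ≠ 0 ∧ S = 1 ∧ R = !![0, x; 1 / x, 0] ∧ G = !![-1, 0; 0, 1]) ∨
    (∃ x : K, x ≠ 0 ∧ S = 1 ∧ R = !![0, x; 1 / x, 0] ∧ G = 1) ∨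
    (S = 1 ∧ R = 1 ∧ G = 1) := by
  simp only [← stabilize_blockAt hn one_le_two, ← stabilize_blockAt hn le_rfl, ← map_mul,
    (stabilize_injective hn).eq_iff, map_eq_one_iff _ (stabilize_injective hn)]
    at hσ hρ hρρ hρσ hγ hγγ hργ hρσρ
  rcases blocks_classification hσ hρ hρρ hρσ hγ hγγ hργ hρσρ
    with h | ⟨q, r, hqr, hR, hS_cases, hG⟩
  · exact .inr <| .inr <| .inr <| .inr h
  have hq : q ≠ 0 := left_ne_zero_of_mul_eq_one hqr
  obtain rfl : r = 1 / q := eq_one_div_of_mul_eq_one_right hqr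
  rcases hS_cases with rfl | ⟨c, rfl⟩
  · rcases hG with hG | hG
    · exact .inr <| .inr <| .inr <| .inl ⟨q, hq, rfl, hR, hG⟩
    · exact .inr <| .inr <| .inl ⟨q, hq, rfl, hR, hG⟩
  · have hc : c ≠ 0 := by
      rintro rfl
      simp [Matrix.isUnit_iff_isUnit_det] at hS
    have hb : q ^ 2 * c ≠ 0 := mul_ne_zero (pow_ne_zero 2 hq) hc
    have hqc : q ^ 2 = q ^ 2 * c / c := (mul_div_cancel_right₀ _ hc).symm
    rcases hG with hG | hG
    · exact .inr <| .inl ⟨_, c, q, hb, hc, hq, hqc, rfl, hR, hG⟩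
    · exact .inl ⟨_, c, q, hb, hc, hq, hqc, rfl, hR, hG⟩

/-- Classification of complex homogeneous local representations of TVBₙ (n ≥ 3) into
GL_{n+1}(ℂ): the blocks S, R, G fall into one of seven cases. -/
theorem stmt_8 (n : ℕ) (hn : 3 ≤ n)
    (S R G : Matrix (Fin 2) (Fin 2) ℂ)
    (hSu : IsUnit S) (hRu : IsUnit R) (hGu : IsUnit G)
    (σ ρ γ : ℕ → Matrix (Fin (n + 1)) (Fin (n + 1)) ℂ)
    (hσ : ∀ i, σ i = localBlock n i S)
    (hρ : ∀ i, ρ i = localBlock n i R)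
    (hγ : ∀ j, γ j = localBlock n j G)
    (rel1 : ∀ i, 1 ≤ i → i + 2 ≤ n →
      σ i * σ (i + 1) * σ i = σ (i + 1) * σ i * σ (i + 1))
    (rel2 : ∀ i j, 1 ≤ i → i + 1 ≤ n → 1 ≤ j → j + 1 ≤ n →
      (i + 2 ≤ j ∨ j + 2 ≤ i) → σ i * σ j = σ j * σ i)
    (rel3 : ∀ i, 1 ≤ i → i + 1 ≤ n → ρ i * ρ i = 1)
    (rel4 : ∀ i j, 1 ≤ i → i + 1 ≤ n → 1 ≤ j → j + 1 ≤ n →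
      (i + 2 ≤ j ∨ j + 2 ≤ i) → ρ i * ρ j = ρ j * ρ i)
    (rel5 : ∀ i, 1 ≤ i → i + 2 ≤ n →
      ρ i * ρ (i + 1) * ρ i = ρ (i + 1) * ρ i * ρ (i + 1))
    (rel6 : ∀ i j, 1 ≤ i → i + 1 ≤ n → 1 ≤ j → j + 1 ≤ n →
      (i + 2 ≤ j ∨ j + 2 ≤ i) → σ i * ρ j = ρ j * σ i)
    (rel7 : ∀ i, 1 ≤ i → i + 2 ≤ n →
      ρ i * ρ (i + 1) * σ i = σ (i + 1) * ρ i * ρ (i + 1))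
    (rel8 : ∀ j, 1 ≤ j → j ≤ n → γ j * γ j = 1)
    (rel9 : ∀ i j, 1 ≤ i → i ≤ n → 1 ≤ j → j ≤ n → γ i * γ j = γ j * γ i)
    (rel10 : ∀ i j, 1 ≤ i → i + 1 ≤ n → 1 ≤ j → j ≤ n →
      (i + 2 ≤ j ∨ j + 2 ≤ i) → γ j * ρ i = ρ i * γ j)
    (rel11 : ∀ i j, 1 ≤ i → i + 1 ≤ n → 1 ≤ j → j ≤ n →
      (i + 2 ≤ j ∨ j + 2 ≤ i) → γ j * σ i = σ i * γ j)
    (rel12 : ∀ i, 1 ≤ i → i + 1 ≤ n → ρ i * γ i = γ (i + 1) * ρ i)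
    (rel13 : ∀ i, 1 ≤ i → i + 1 ≤ n →
      ρ i * σ i * ρ i = γ (i + 1) * γ i * σ i * γ i * γ (i + 1)) :
    (∃ b c r : ℂ, b ≠ 0 ∧ c ≠ 0 ∧ r ≠ 0 ∧ r ^ 2 = b / c ∧
      S = !![0, b; c, 0] ∧ R = !![0, -r; -(1 / r), 0] ∧
      G = !![(-1 : ℂ), 0; 0, 1]) ∨
    (∃ b c r : ℂ, b ≠ 0 ∧ c ≠ 0 ∧ r ≠ 0 ∧ r ^ 2 = b / c ∧
      S = !![0, b; c, 0] ∧ R = !![0, r; 1 / r, 0] ∧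
      G = !![(-1 : ℂ), 0; 0, 1]) ∨
    (∃ b c r : ℂ, b ≠ 0 ∧ c ≠ 0 ∧ r ≠ 0 ∧ r ^ 2 = b / c ∧
      S = !![0, b; c, 0] ∧ R = !![0, -r; -(1 / r), 0] ∧ G = 1) ∨
    (∃ b c r : ℂ, b ≠ 0 ∧ c ≠ 0 ∧ r ≠ 0 ∧ r ^ 2 = b / c ∧
      S = !![0, b; c, 0] ∧ R = !![0, r; 1 / r, 0] ∧ G = 1) ∨
    (∃ x : ℂ, x ≠ 0 ∧ S = 1 ∧ R = !![0, x; 1 / x, 0] ∧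
      G = !![(-1 : ℂ), 0; 0, 1]) ∨
    (∃ x : ℂ, x ≠ 0 ∧ S = 1 ∧ R = !![0, x; 1 / x, 0] ∧ G = 1) ∨
    (S = 1 ∧ R = 1 ∧ G = 1) := by
  obtain ⟨rfl, rfl, rfl⟩ := And.intro (funext hσ) (And.intro (funext hρ) (funext hγ))
  exact .inr <| (stmt_8_general (by omega) hSu (rel1 1 le_rfl hn) (rel3 1 le_rfl (by omega))
    (rel5 1 le_rfl hn) (rel7 1 le_rfl hn) (rel8 1 le_rfl (by omega))
    (rel9 1 2 le_rfl (by omega) (by omega) (by omega)) (rel12 1 le_rfl (by omega))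
    (rel13 1 le_rfl (by omega))).imp_right .inr
end

section
/- Fix n ≥ 3 and let b,c,r ∈ ℂ be nonzero with r² = b/c. For a 2×2 complex matrix M and 1 ≤ i ≤ n, let Lᵢ(M) denote the (n+1)×(n+1) complex matrix that agrees with the identity everywhere except that its 2×2 submatrix in rows and columns i, i+1 equals M. Set S = [[0,b],[c,0]], R = [[0,−r],[−1/r,0]], G = diag(−1,1), and define σᵢ = Lᵢ(S), ρᵢ = Lᵢ(R) (1 ≤ i ≤ n−1), γⱼ = Lⱼ(G) (1 ≤ j ≤ n). Then all defining relations of TVBₙ hold: σᵢσᵢ₊₁σᵢ = σᵢ₊₁σᵢσᵢ₊₁; σᵢσⱼ = σⱼσᵢ for |i−j| ≥ 2; ρᵢ² = I; ρᵢρⱼ = ρⱼρᵢ for |i−j| ≥ 2; ρᵢρᵢ₊₁ρᵢ = ρᵢ₊₁ρᵢρᵢ₊₁; σᵢρⱼ = ρⱼσᵢ for |i−j| ≥ 2; ρᵢρᵢ₊₁σᵢ = σᵢ₊₁ρᵢρᵢ₊₁; γⱼ² = I; γᵢγⱼ = γⱼγᵢ; γⱼρᵢ = ρᵢγⱼ and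 γⱼσᵢ = σᵢγⱼ for |i−j| ≥ 2; ρᵢγᵢ = γᵢ₊₁ρᵢ; ρᵢσᵢρᵢ = γᵢ₊₁γᵢσᵢγᵢγᵢ₊₁. (Hence these matrices define the complex homogeneous local representation ζ'₁ of TVBₙ into GL_{n+1}(ℂ).) -/
/-!
The map `M ↦ Lᵢ(M)` is multiplicative, and so is the extension by the identity along any injection
of index sets. Relations among blocks on one pair of coordinates are therefore relations among
2×2 matrices, and relations among blocks on two adjacent pairs are relations among 3×3 matrices;
blocks on disjoint pairs commute. For the diagonal generators one has `Lᵢ₊₁(G) = Lᵢ(-G)`, which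
brings the relations between `ρᵢ`, `σᵢ`, `γᵢ` and `γᵢ₊₁` down to 2×2 matrices: they say
`R G = -G R` and `R S R = S`.
-/

section CoordinateMatrices

variable {A l m ι : Type*} [Semiring A] [DecidableEq ι]

/-- The matrix of the map `(l → A) → (ι → A)` sending the basis vector `a` to the basis
vector `f a`. -/
def coordInclusion (A : Type*) [Semiring A] (f : l → ι) : Matrix ι l A :=
  (1 : Matrix ι ι A).submatrix id f

/-- The matrix of the map `(ι → A) → (l → A)` sending a vector `v` to `v ∘ f`. -/
def coordProjection (A : Type*) [Semiring A] (f : l → ι) : Matrix l ι A :=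
  (1 : Matrix ι ι A).submatrix f id

theorem coordProjection_mul_coordInclusion [Fintype ι] (f : l → ι) (g : m → ι) :
    coordProjection A f * coordInclusion A g = (1 : Matrix ι ι A).submatrix f g :=
  Matrix.one_submatrix_mul f (Equiv.refl ι) _

theorem coordInclusion_mul_coordInclusion [Fintype m] [DecidableEq m] (f : l → m) (g : m → ι) :
    coordInclusion A g * coordInclusion A f = coordInclusion A (g ∘ f) :=
  Matrix.mul_submatrix_one (Equiv.refl m) f _

theorem coordProjection_mul_coordProjection [Fintype m] [DecidableEq m] (f : l → m) (g : m → ι) :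
    coordProjection A f * coordProjection A g = coordProjection A (g ∘ f) :=
  Matrix.one_submatrix_mul f (Equiv.refl m) _

theorem coordInclusion_mul_mul_coordProjection_mul [Fintype ι] [Fintype l] [Fintype m]
    (f : l → ι) (g : m → ι) (M : Matrix l l A) (N : Matrix m m A) :
    coordInclusion A f * M * coordProjection A f * (coordInclusion A g * N * coordProjection A g) =
      coordInclusion A f * (M * (1 : Matrix ι ι A).submatrix f g * N) * coordProjection A g := by
  simp only [← coordProjection_mul_coordInclusion, Matrix.mul_assoc]

end CoordinateMatrices

section EmbedBlock

variable {A l m ι : Type*} [Ring A]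
  [Fintype l] [DecidableEq l] [Fintype m] [DecidableEq m] [Fintype ι] [DecidableEq ι]

/-- The matrix that acts through `M` on the coordinates in the range of `f` and fixes all other
coordinates, as a homomorphism in `M`. It is encoded as `1 + P (M - 1) Q` with `P` the inclusion
of the coordinates along `f` and `Q` the projection onto them; as `Q P = 1`, this is
multiplicative. -/
def embedBlock (f : m ↪ ι) : Matrix m m A →* Matrix ι ι A where
  toFun M := 1 + coordInclusion A f * (M - 1) * coordProjection A f
  map_one' := by simp
  map_mul' M N := by
    have hsub : M * N - 1 = (M - 1) + (N - 1) + (M - 1) * (N - 1) := by noncomm_ring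
    rw [hsub, add_mul, mul_add, mul_add, coordInclusion_mul_mul_coordProjection_mul,
      Matrix.submatrix_one f f.injective]
    simp only [Matrix.mul_add, Matrix.add_mul, one_mul, mul_one]
    abel

theorem embedBlock_def (f : m ↪ ι) (M : Matrix m m A) :
    embedBlock f M = 1 + coordInclusion A f * (M - 1) * coordProjection A f :=
  rfl

theorem embedBlock_trans (f : l ↪ m) (g : m ↪ ι) (M : Matrix l l A) :
    embedBlock (f.trans g) M = embedBlock g (embedBlock f M) := by
  simp only [embedBlock_def, add_sub_cancel_left, Function.Embedding.coe_trans,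
    ← coordInclusion_mul_coordInclusion, ← coordProjection_mul_coordProjection, Matrix.mul_assoc]

theorem commute_embedBlock_of_disjoint_range {f : l ↪ ι} {g : m ↪ ι}
    (hfg : Disjoint (Set.range f) (Set.range g)) (M : Matrix l l A) (N : Matrix m m A) :
    Commute (embedBlock f M) (embedBlock g N) := by
  have hne (a : l) (b : m) : f a ≠ g b :=
    Set.disjoint_iff_forall_ne.1 hfg (Set.mem_range_self a) (Set.mem_range_self b)
  have hfg_zero : (1 : Matrix ι ι A).submatrix f g = 0 :=
    Matrix.ext fun a b => Matrix.one_apply_ne (hne a b)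
  have hgf_zero : (1 : Matrix ι ι A).submatrix g f = 0 :=
    Matrix.ext fun b a => Matrix.one_apply_ne (hne a b).symm
  have hcomm : Commute (coordInclusion A f * (M - 1) * coordProjection A f)
      (coordInclusion A g * (N - 1) * coordProjection A g) := by
    simp only [Commute, SemiconjBy, coordInclusion_mul_mul_coordProjection_mul, hfg_zero,
      hgf_zero, Matrix.mul_zero, Matrix.zero_mul]
  exact (Commute.one_left _).add_left ((Commute.one_right _).add_right hcomm)

theorem isDiag_embedBlock (f : m ↪ ι) {M : Matrix m m A} (hM : M.IsDiag) :
    (embedBlock f M).IsDiag := by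
  intro r s hrs
  obtain ⟨d, hd⟩ : ∃ d, M - 1 = Matrix.diagonal d :=
    ⟨_, (hM.sub Matrix.isDiag_one).diagonal_diag.symm⟩
  rw [embedBlock_def, Matrix.add_apply, Matrix.one_apply_ne hrs, zero_add, hd, Matrix.mul_apply]
  refine Finset.sum_eq_zero fun a _ => ?_
  rw [Matrix.mul_diagonal]
  obtain hr | hs : r ≠ f a ∨ f a ≠ s := by grind
  · simp [coordInclusion, hr]
  · simp [coordProjection, hs]

theorem commute_embedBlock_of_isDiag {R : Type*} [CommRing R] (f : l ↪ ι) (g : m ↪ ι)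
    {M : Matrix l l R} {N : Matrix m m R} (hM : M.IsDiag) (hN : N.IsDiag) :
    Commute (embedBlock f M) (embedBlock g N) := by
  rw [← (isDiag_embedBlock f hM).diagonal_diag, ← (isDiag_embedBlock g hN).diagonal_diag]
  exact Matrix.commute_diagonal _ _

end EmbedBlock

section Triple

variable {A ι : Type*} [Fintype ι] [DecidableEq ι]

theorem embedBlock_castSuccEmb [Ring A] (M : Matrix (Fin 2) (Fin 2) A) :
    embedBlock Fin.castSuccEmb M = !![M 0 0, M 0 1, 0; M 1 0, M 1 1, 0; 0, 0, 1] := by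
  ext r s
  fin_cases r <;> fin_cases s <;>
    simp [embedBlock_def, coordInclusion, coordProjection, Matrix.mul_apply, Fin.sum_univ_two,
      Matrix.one_apply]

theorem embedBlock_succEmb [Ring A] (M : Matrix (Fin 2) (Fin 2) A) :
    embedBlock (Fin.succEmb 2) M = !![1, 0, 0; 0, M 0 0, M 0 1; 0, M 1 0, M 1 1] := by
  ext r s
  fin_cases r <;> fin_cases s <;>
    simp [embedBlock_def, coordInclusion, coordProjection, Matrix.mul_apply, Fin.sum_univ_two,
      Matrix.one_apply]

theorem embedBlock_succEmb_trans_diag [Ring A] (g : Fin 3 ↪ ι) (a : A) :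
    embedBlock ((Fin.succEmb 2).trans g) !![a, 0; 0, 1] =
      embedBlock (Fin.castSuccEmb.trans g) !![1, 0; 0, a] := by
  simp [embedBlock_trans, embedBlock_castSuccEmb, embedBlock_succEmb]

theorem embedBlock_braid [CommRing A] (g : Fin 3 ↪ ι) (x y z w : A) :
    embedBlock (Fin.castSuccEmb.trans g) !![0, x; y, 0] *
        embedBlock ((Fin.succEmb 2).trans g) !![0, x; y, 0] *
        embedBlock (Fin.castSuccEmb.trans g) !![0, z; w, 0] =
      embedBlock ((Fin.succEmb 2).trans g) !![0, z; w, 0] *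
        embedBlock (Fin.castSuccEmb.trans g) !![0, x; y, 0] *
        embedBlock ((Fin.succEmb 2).trans g) !![0, x; y, 0] := by
  simp only [embedBlock_trans, ← map_mul, embedBlock_castSuccEmb, embedBlock_succEmb]
  congr 1
  simp [mul_comm]

end Triple

section Window

variable {N i k : ℕ}

/-- The `k` consecutive coordinates `i, …, i + k - 1` out of `1, …, N`, as elements of `Fin N`:
`i` is counted from `1`, hence the shift. -/
def window (k : ℕ) (_ : 1 ≤ i) (hik : i + k ≤ N + 1) : Fin k ↪ Fin N :=
  (Fin.natAddEmb (i - 1)).trans (Fin.castLEEmb (by omega))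

theorem val_window (hi : 1 ≤ i) (hik : i + k ≤ N + 1) (a : Fin k) :
    (window k hi hik a : ℕ) = i - 1 + a :=
  rfl

theorem castSuccEmb_trans_window (hi : 1 ≤ i) (hik : i + (k + 1) ≤ N + 1) :
    Fin.castSuccEmb.trans (window (k + 1) hi hik) = window k hi (by omega) :=
  rfl

theorem succEmb_trans_window (hi : 1 ≤ i) (hik : i + (k + 1) ≤ N + 1) :
    (Fin.succEmb k).trans (window (k + 1) hi hik) =
      window k (Nat.le_add_left 1 i) (by omega) := by
  ext a
  simp only [Function.Embedding.trans_apply, Fin.coe_succEmb, val_window, Fin.val_succ]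
  omega

theorem disjoint_range_window {j l : ℕ} (hi : 1 ≤ i) (hik : i + k ≤ N + 1)
    (hj : 1 ≤ j) (hjl : j + l ≤ N + 1) (hij : i + k ≤ j ∨ j + l ≤ i) :
    Disjoint (Set.range (window k hi hik)) (Set.range (window l hj hjl)) := by
  rw [Set.disjoint_iff_forall_ne]
  rintro _ ⟨a, rfl⟩ _ ⟨b, rfl⟩ hab
  have hval := congrArg Fin.val hab
  simp only [val_window] at hval
  omega

end Window

/-- `L i M` is the matrix that acts through `M` on the coordinates `i`, `i + 1` (counted from `1`)
and fixes the others, for `1 ≤ i ≤ n`; nothing is required of the other values of `i`. -/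
def IsAdjacentBlockFamily {A : Type*} [Ring A] {n : ℕ}
    (L : ℕ → Matrix (Fin 2) (Fin 2) A → Matrix (Fin (n + 1)) (Fin (n + 1)) A) : Prop :=
  ∀ i (hi : 1 ≤ i) (hin : i ≤ n) M, L i M = embedBlock (window 2 hi (by omega)) M

namespace IsAdjacentBlockFamily

section Ring

variable {A : Type*} [Ring A] {n i j : ℕ}
  {L : ℕ → Matrix (Fin 2) (Fin 2) A → Matrix (Fin (n + 1)) (Fin (n + 1)) A}

theorem map_one (hL : IsAdjacentBlockFamily L) (hi : 1 ≤ i) (hin : i ≤ n) : L i 1 = 1 := by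
  rw [hL i hi hin, _root_.map_one]

theorem map_mul (hL : IsAdjacentBlockFamily L) (hi : 1 ≤ i) (hin : i ≤ n)
    (M M' : Matrix (Fin 2) (Fin 2) A) : L i (M * M') = L i M * L i M' := by
  simp only [hL i hi hin, _root_.map_mul]

theorem commute (hL : IsAdjacentBlockFamily L) (hi : 1 ≤ i) (hin : i ≤ n) (hj : 1 ≤ j)
    (hjn : j ≤ n) (hij : i + 2 ≤ j ∨ j + 2 ≤ i) (M M' : Matrix (Fin 2) (Fin 2) A) :
    Commute (L i M) (L j M') := by
  rw [hL i hi hin, hL j hj hjn]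
  exact commute_embedBlock_of_disjoint_range (disjoint_range_window _ _ _ _ hij) M M'

theorem succ_diag (hL : IsAdjacentBlockFamily L) (hi : 1 ≤ i) (hin : i + 1 ≤ n) (a : A) :
    L (i + 1) !![a, 0; 0, 1] = L i !![1, 0; 0, a] := by
  have hi3 : i + 3 ≤ n + 1 + 1 := by omega
  rw [hL i hi (by omega), hL (i + 1) (by omega) hin]
  simpa only [castSuccEmb_trans_window, succEmb_trans_window] using
    embedBlock_succEmb_trans_diag (window 3 hi hi3) a

end Ring

section CommRing

variable {A : Type*} [CommRing A] {n i j : ℕ}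
  {L : ℕ → Matrix (Fin 2) (Fin 2) A → Matrix (Fin (n + 1)) (Fin (n + 1)) A}

theorem commute_of_isDiag (hL : IsAdjacentBlockFamily L) (hi : 1 ≤ i) (hin : i ≤ n) (hj : 1 ≤ j)
    (hjn : j ≤ n) {M M' : Matrix (Fin 2) (Fin 2) A} (hM : M.IsDiag) (hM' : M'.IsDiag) :
    Commute (L i M) (L j M') := by
  rw [hL i hi hin, hL j hj hjn]
  exact commute_embedBlock_of_isDiag _ _ hM hM'

theorem braid (hL : IsAdjacentBlockFamily L) (hi : 1 ≤ i) (hin : i + 1 ≤ n) (x y z w : A) :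
    L i !![0, x; y, 0] * L (i + 1) !![0, x; y, 0] * L i !![0, z; w, 0] =
      L (i + 1) !![0, z; w, 0] * L i !![0, x; y, 0] * L (i + 1) !![0, x; y, 0] := by
  have hi3 : i + 3 ≤ n + 1 + 1 := by omega
  simp only [hL i hi (by omega), hL (i + 1) (by omega) hin]
  simpa only [castSuccEmb_trans_window, succEmb_trans_window] using
    embedBlock_braid (window 3 hi hi3) x y z w

end CommRing

end IsAdjacentBlockFamily

theorem isAdjacentBlockFamily_localBlock (n : ℕ) : IsAdjacentBlockFamily (localBlock n) := by
  intro i hi hin M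
  ext r s
  simp only [localBlock, embedBlock_def, coordInclusion, coordProjection, Matrix.of_apply,
    Matrix.add_apply, Matrix.mul_apply, Fin.sum_univ_two, Matrix.submatrix_apply,
    Matrix.one_apply, Matrix.sub_apply, Fin.ext_iff, val_window, id]
  split_ifs <;> first | omega | simp_all

section TwoByTwo

variable {A : Type*}

theorem diag_one_neg_one [Ring A] : !![1, 0; 0, -1] = (-!![-1, 0; 0, 1] : Matrix _ _ A) := by
  simp

theorem diag_neg_one_one_mul_self [Ring A] :
    !![-1, 0; 0, 1] * !![-1, 0; 0, 1] = (1 : Matrix _ _ A) := by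
  simp [Matrix.one_fin_two]

theorem isDiag_diag_neg_one_one [Ring A] : (!![-1, 0; 0, 1] : Matrix _ _ A).IsDiag := by
  simp [Matrix.IsDiag, Pairwise, Fin.forall_fin_two]

theorem antidiag_mul_self [CommRing A] {x y : A} (hxy : x * y = 1) :
    !![0, x; y, 0] * !![0, x; y, 0] = 1 := by
  simp [Matrix.one_fin_two, hxy, mul_comm y x]

theorem antidiag_mul_diag [CommRing A] (x y a : A) :
    !![0, x; y, 0] * !![a, 0; 0, 1] = !![1, 0; 0, a] * !![0, x; y, 0] := by
  simp [mul_comm]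

theorem antidiag_mul_antidiag_mul_antidiag [CommRing A] (x y b c : A) :
    !![0, x; y, 0] * !![0, b; c, 0] * !![0, x; y, 0] = !![0, x ^ 2 * c; y ^ 2 * b, 0] := by
  simp [pow_two, mul_right_comm]

end TwoByTwo

/-- The defining relations of the twisted virtual braid group `TVBₙ` for elements `σ i`, `ρ i`
(`1 ≤ i ≤ n - 1`) and `γ j` (`1 ≤ j ≤ n`) of a monoid. The families are indexed by all natural
numbers; their values outside these ranges are unconstrained. -/
structure TVBRelations {M : Type*} [Monoid M] (n : ℕ) (σ ρ γ : ℕ → M) : Prop where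
  braid_σ : ∀ i, 1 ≤ i → i + 2 ≤ n → σ i * σ (i + 1) * σ i = σ (i + 1) * σ i * σ (i + 1)
  commute_σ_σ : ∀ i j, 1 ≤ i → i + 1 ≤ n → 1 ≤ j → j + 1 ≤ n → (i + 2 ≤ j ∨ j + 2 ≤ i) →
    Commute (σ i) (σ j)
  ρ_mul_self : ∀ i, 1 ≤ i → i + 1 ≤ n → ρ i * ρ i = 1
  commute_ρ_ρ : ∀ i j, 1 ≤ i → i + 1 ≤ n → 1 ≤ j → j + 1 ≤ n → (i + 2 ≤ j ∨ j + 2 ≤ i) →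
    Commute (ρ i) (ρ j)
  braid_ρ : ∀ i, 1 ≤ i → i + 2 ≤ n → ρ i * ρ (i + 1) * ρ i = ρ (i + 1) * ρ i * ρ (i + 1)
  commute_σ_ρ : ∀ i j, 1 ≤ i → i + 1 ≤ n → 1 ≤ j → j + 1 ≤ n → (i + 2 ≤ j ∨ j + 2 ≤ i) →
    Commute (σ i) (ρ j)
  braid_ρ_σ : ∀ i, 1 ≤ i → i + 2 ≤ n → ρ i * ρ (i + 1) * σ i = σ (i + 1) * ρ i * ρ (i + 1)
  γ_mul_self : ∀ j, 1 ≤ j → j ≤ n → γ j * γ j = 1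
  commute_γ_γ : ∀ i j, 1 ≤ i → i ≤ n → 1 ≤ j → j ≤ n → Commute (γ i) (γ j)
  commute_γ_ρ : ∀ i j, 1 ≤ i → i + 1 ≤ n → 1 ≤ j → j ≤ n → (i + 2 ≤ j ∨ j + 2 ≤ i) →
    Commute (γ j) (ρ i)
  commute_γ_σ : ∀ i j, 1 ≤ i → i + 1 ≤ n → 1 ≤ j → j ≤ n → (i + 2 ≤ j ∨ j + 2 ≤ i) →
    Commute (γ j) (σ i)
  ρ_mul_γ : ∀ i, 1 ≤ i → i + 1 ≤ n → ρ i * γ i = γ (i + 1) * ρ i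
  ρ_σ_ρ : ∀ i, 1 ≤ i → i + 1 ≤ n →
    ρ i * σ i * ρ i = γ (i + 1) * γ i * σ i * γ i * γ (i + 1)

theorem stmt_9_general {A : Type*} [CommRing A] {n : ℕ}
    {L : ℕ → Matrix (Fin 2) (Fin 2) A → Matrix (Fin (n + 1)) (Fin (n + 1)) A}
    (hL : IsAdjacentBlockFamily L) (c : A) {r s : A} (hrs : r * s = 1) :
    TVBRelations n (fun i => L i !![0, r ^ 2 * c; c, 0]) (fun i => L i !![0, -r; -s, 0])
      (fun j => L j !![-1, 0; 0, 1]) where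
  braid_σ i hi hin := hL.braid hi (by omega) _ _ _ _
  commute_σ_σ i j hi hin hj hjn hij := hL.commute hi (by omega) hj (by omega) hij _ _
  ρ_mul_self i hi hin := by
    rw [← hL.map_mul hi (by omega), antidiag_mul_self (by rw [neg_mul_neg, hrs]),
      hL.map_one hi (by omega)]
  commute_ρ_ρ i j hi hin hj hjn hij := hL.commute hi (by omega) hj (by omega) hij _ _
  braid_ρ i hi hin := hL.braid hi (by omega) _ _ _ _
  commute_σ_ρ i j hi hin hj hjn hij := hL.commute hi (by omega) hj (by omega) hij _ _
  braid_ρ_σ i hi hin := hL.braid hi (by omega) _ _ _ _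
  γ_mul_self j hj hjn := by
    rw [← hL.map_mul hj hjn, diag_neg_one_one_mul_self, hL.map_one hj hjn]
  commute_γ_γ i j hi hin hj hjn :=
    hL.commute_of_isDiag hi hin hj hjn isDiag_diag_neg_one_one isDiag_diag_neg_one_one
  commute_γ_ρ i j hi hin hj hjn hij := (hL.commute hi (by omega) hj hjn hij _ _).symm
  commute_γ_σ i j hi hin hj hjn hij := (hL.commute hi (by omega) hj hjn hij _ _).symm
  ρ_mul_γ i hi hin := by
    rw [hL.succ_diag hi hin, ← hL.map_mul hi (by omega), ← hL.map_mul hi (by omega),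
      antidiag_mul_diag]
  ρ_σ_ρ i hi hin := by
    have hc : (-s) ^ 2 * (r ^ 2 * c) = c := by
      rw [neg_sq, ← mul_assoc, ← mul_pow, mul_comm s, hrs, one_pow, one_mul]
    simp only [hL.succ_diag hi hin, ← hL.map_mul hi (Nat.le_of_succ_le hin)]
    rw [antidiag_mul_antidiag_mul_antidiag, hc, neg_sq, diag_one_neg_one, neg_mul, mul_neg,
      diag_neg_one_one_mul_self, mul_assoc, diag_neg_one_one_mul_self, neg_one_mul, mul_one,
      neg_neg]

/-- The matrices σᵢ = Lᵢ(S), ρᵢ = Lᵢ(R), γⱼ = Lⱼ(G) with S = [[0,b],[c,0]],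
R = [[0,−r],[−1/r,0]] (r² = b/c), G = diag(−1,1) satisfy all defining relations of
TVBₙ; hence they define the homogeneous local representation ζ'₁ of TVBₙ. -/
theorem stmt_9 (n : ℕ) (hn : 3 ≤ n) (b c r : ℂ)
    (hb : b ≠ 0) (hc : c ≠ 0) (hr : r ≠ 0) (hr2 : r ^ 2 = b / c)
    (S R G : Matrix (Fin 2) (Fin 2) ℂ)
    (hS : S = !![0, b; c, 0])
    (hR : R = !![0, -r; -(1 / r), 0])
    (hG : G = !![(-1 : ℂ), 0; 0, 1])
    (σ ρ γ : ℕ → Matrix (Fin (n + 1)) (Fin (n + 1)) ℂ)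
    (hσ : ∀ i, σ i = localBlock n i S)
    (hρ : ∀ i, ρ i = localBlock n i R)
    (hγ : ∀ j, γ j = localBlock n j G) :
    (∀ i, 1 ≤ i → i + 2 ≤ n →
      σ i * σ (i + 1) * σ i = σ (i + 1) * σ i * σ (i + 1)) ∧
    (∀ i j, 1 ≤ i → i + 1 ≤ n → 1 ≤ j → j + 1 ≤ n → (i + 2 ≤ j ∨ j + 2 ≤ i) →
      σ i * σ j = σ j * σ i) ∧
    (∀ i, 1 ≤ i → i + 1 ≤ n → ρ i * ρ i = 1) ∧
    (∀ i j, 1 ≤ i → i + 1 ≤ n → 1 ≤ j → j + 1 ≤ n → (i + 2 ≤ j ∨ j + 2 ≤ i) →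
      ρ i * ρ j = ρ j * ρ i) ∧
    (∀ i, 1 ≤ i → i + 2 ≤ n →
      ρ i * ρ (i + 1) * ρ i = ρ (i + 1) * ρ i * ρ (i + 1)) ∧
    (∀ i j, 1 ≤ i → i + 1 ≤ n → 1 ≤ j → j + 1 ≤ n → (i + 2 ≤ j ∨ j + 2 ≤ i) →
      σ i * ρ j = ρ j * σ i) ∧
    (∀ i, 1 ≤ i → i + 2 ≤ n →
      ρ i * ρ (i + 1) * σ i = σ (i + 1) * ρ i * ρ (i + 1)) ∧
    (∀ j, 1 ≤ j → j ≤ n → γ j * γ j = 1) ∧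
    (∀ i j, 1 ≤ i → i ≤ n → 1 ≤ j → j ≤ n → γ i * γ j = γ j * γ i) ∧
    (∀ i j, 1 ≤ i → i + 1 ≤ n → 1 ≤ j → j ≤ n → (i + 2 ≤ j ∨ j + 2 ≤ i) →
      γ j * ρ i = ρ i * γ j) ∧
    (∀ i j, 1 ≤ i → i + 1 ≤ n → 1 ≤ j → j ≤ n → (i + 2 ≤ j ∨ j + 2 ≤ i) →
      γ j * σ i = σ i * γ j) ∧
    (∀ i, 1 ≤ i → i + 1 ≤ n → ρ i * γ i = γ (i + 1) * ρ i) ∧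
    (∀ i, 1 ≤ i → i + 1 ≤ n →
      ρ i * σ i * ρ i = γ (i + 1) * γ i * σ i * γ i * γ (i + 1)) := by
  obtain rfl : b = r ^ 2 * c := by rw [hr2, div_mul_cancel₀ b hc]
  subst hS hR hG
  obtain rfl := funext hσ
  obtain rfl := funext hρ
  obtain rfl := funext hγ
  have h := stmt_9_general (isAdjacentBlockFamily_localBlock n) c (mul_one_div_cancel hr)
  exact ⟨h.braid_σ, h.commute_σ_σ, h.ρ_mul_self, h.commute_ρ_ρ, h.braid_ρ, h.commute_σ_ρ,
    h.braid_ρ_σ, h.γ_mul_self, h.commute_γ_γ, h.commute_γ_ρ, h.commute_γ_σ, h.ρ_mul_γ, h.ρ_σ_ρ⟩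
end

section
/- Let a,b,x,f,g ∈ ℂ with x ≠ 0 and a²x² − b² ≠ 0, and set S = [[a,b,0],[b/x²,a,0],[0,0,1]], R = [[0,x,0],[1/x,0,0],[0,0,1]], T = [[f,g,0],[g/x²,f,0],[0,0,1]], G₁ = diag(−1,1,1), G₂ = diag(1,−1,1). Then S, R, G₁, G₂ are invertible and all defining relations of STVB₂ hold: R² = I₃, G₁² = I₃, G₂² = I₃, G₁G₂ = G₂G₁, RG₁ = G₂R, RSR = G₂G₁SG₁G₂, ST = TS, and RTR = G₂G₁TG₁G₂. (Hence the assignment σ₁ ↦ S, ρ₁ ↦ R, τ₁ ↦ T, γ₁ ↦ G₁, γ₂ ↦ G₂ defines the complex local representation η₁ of STVB₂ into M₃(ℂ).) -/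
/-! The matrices are images, under the embedding `A ↦ A ⊕ 1` of `2 × 2` into `3 × 3` matrices, of
elements of the algebra generated by two anticommuting involutions `ρ` and `γ`: `G₁` and `G₂` come
from `γ` and `-γ`, and `S`, `T` from `a + (b / x) ρ`, `f + (g / x) ρ`. The last two lie in the
commutative subalgebra generated by `ρ`, so they commute with each other and are fixed by
conjugation with `ρ`; conjugation with `γ₂ γ₁ = -1` fixes everything. Finally,
`(a + c ρ) (a - c ρ) = a² - c²` makes `S` invertible. -/

/-- The elements `σ`, `ρ`, `τ`, `γ₁`, `γ₂` of a monoid `M` are the images of the generators of the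
singular twisted virtual braid monoid `STVB₂` under a homomorphism to `M`. Invertibility of `ρ`,
`γ₁` and `γ₂` is not a field, since these are involutions. -/
structure IsSTVB₂Rep {M : Type*} [Monoid M] (σ ρ τ γ₁ γ₂ : M) : Prop where
  isUnit_σ : IsUnit σ
  ρ_mul_self : ρ * ρ = 1
  γ₁_mul_self : γ₁ * γ₁ = 1
  γ₂_mul_self : γ₂ * γ₂ = 1
  γ₁_mul_γ₂ : γ₁ * γ₂ = γ₂ * γ₁
  ρ_mul_γ₁ : ρ * γ₁ = γ₂ * ρ
  ρ_mul_σ_mul_ρ : ρ * σ * ρ = γ₂ * γ₁ * σ * γ₁ * γ₂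
  σ_mul_τ : σ * τ = τ * σ
  ρ_mul_τ_mul_ρ : ρ * τ * ρ = γ₂ * γ₁ * τ * γ₁ * γ₂

theorem IsSTVB₂Rep.map {M N : Type*} [Monoid M] [Monoid N] {σ ρ τ γ₁ γ₂ : M}
    (h : IsSTVB₂Rep σ ρ τ γ₁ γ₂) (φ : M →* N) :
    IsSTVB₂Rep (φ σ) (φ ρ) (φ τ) (φ γ₁) (φ γ₂) where
  isUnit_σ := h.isUnit_σ.map φ
  ρ_mul_self := by rw [← map_mul, h.ρ_mul_self, map_one]
  γ₁_mul_self := by rw [← map_mul, h.γ₁_mul_self, map_one]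
  γ₂_mul_self := by rw [← map_mul, h.γ₂_mul_self, map_one]
  γ₁_mul_γ₂ := by simp only [← map_mul, h.γ₁_mul_γ₂]
  ρ_mul_γ₁ := by simp only [← map_mul, h.ρ_mul_γ₁]
  ρ_mul_σ_mul_ρ := by simp only [← map_mul, h.ρ_mul_σ_mul_ρ]
  σ_mul_τ := by simp only [← map_mul, h.σ_mul_τ]
  ρ_mul_τ_mul_ρ := by simp only [← map_mul, h.ρ_mul_τ_mul_ρ]

theorem commute_algebraMap_add_smul {K A : Type*} [CommSemiring K] [Semiring A] [Algebra K A]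
    {s ρ : A} (hs : Commute s ρ) (a c : K) : Commute s (algebraMap K A a + c • ρ) :=
  (Algebra.commute_algebraMap_right a s).add_right (hs.smul_right c)

section Involution

variable {K A : Type*} [CommRing K] [Ring A] [Algebra K A] {ρ γ : A}

theorem isUnit_algebraMap_add_smul_of_mul_self_eq_one (hρ : ρ * ρ = 1) {a c : K}
    (h : IsUnit (a ^ 2 - c ^ 2)) : IsUnit (algebraMap K A a + c • ρ) := by
  have hcomm : Commute (algebraMap K A a) (c • ρ) := Algebra.commute_algebraMap_left a _
  have hsq : (c • ρ) * (c • ρ) = algebraMap K A (c ^ 2) := by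
    rw [smul_mul_smul_comm, hρ, ← sq, Algebra.algebraMap_eq_smul_one]
  have hprod : (algebraMap K A a + c • ρ) * (algebraMap K A a - c • ρ) =
      algebraMap K A (a ^ 2 - c ^ 2) := by
    rw [← hcomm.mul_self_sub_mul_self_eq, hsq, ← map_mul, ← map_sub, ← sq]
  have hfactors : Commute (algebraMap K A a + c • ρ) (algebraMap K A a - c • ρ) :=
    ((Commute.refl _).sub_right hcomm).add_left (hcomm.symm.sub_right (Commute.refl _))
  exact (hfactors.isUnit_mul_iff.mp (hprod ▸ h.map (algebraMap K A))).1

theorem isSTVB₂Rep_of_anticommuting_involutions (hρ : ρ * ρ = 1) (hγ : γ * γ = 1)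
    (hργ : ρ * γ = -(γ * ρ)) {a c : K} (f d : K) (h : IsUnit (a ^ 2 - c ^ 2)) :
    IsSTVB₂Rep (algebraMap K A a + c • ρ) ρ (algebraMap K A f + d • ρ) γ (-γ) := by
  have conj_eq (s : A) (hs : Commute ρ s) : ρ * s * ρ = -γ * γ * s * γ * -γ := by
    calc ρ * s * ρ = s := by rw [hs.eq, mul_assoc, hρ, mul_one]
      _ = -γ * γ * s * γ * -γ := by simp [mul_assoc, hγ]
  have hρ_comm (p q : K) : Commute ρ (algebraMap K A p + q • ρ) :=
    commute_algebraMap_add_smul (Commute.refl ρ) p q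
  exact
    { isUnit_σ := isUnit_algebraMap_add_smul_of_mul_self_eq_one hρ h
      ρ_mul_self := hρ
      γ₁_mul_self := hγ
      γ₂_mul_self := by rw [neg_mul_neg, hγ]
      γ₁_mul_γ₂ := by rw [mul_neg, neg_mul]
      ρ_mul_γ₁ := by rw [hργ, neg_mul]
      ρ_mul_σ_mul_ρ := conj_eq _ (hρ_comm a c)
      σ_mul_τ := commute_algebraMap_add_smul (hρ_comm a c).symm f d
      ρ_mul_τ_mul_ρ := conj_eq _ (hρ_comm f d) }

end Involution

/-- The block embedding `A ↦ A ⊕ 1` of `m × m` matrices into `(m + n) × (m + n)` matrices, through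
which a local representation extends the matrix of a generator by the identity. -/
def directSumOne {R : Type*} [Semiring R] (m n : ℕ) :
    Matrix (Fin m) (Fin m) R →* Matrix (Fin (m + n)) (Fin (m + n)) R where
  toFun A := Matrix.reindex finSumFinEquiv finSumFinEquiv (Matrix.fromBlocks A 0 0 1)
  map_one' := by simp
  map_mul' A B := by
    simp [Matrix.submatrix_mul_equiv, Matrix.fromBlocks_multiply]

theorem directSumOne_two_one_of {R : Type*} [Semiring R] (p q r s : R) :
    directSumOne 2 1 !![p, q; r, s] = !![p, q, 0; r, s, 0; 0, 0, 1] := by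
  ext i j
  fin_cases i <;> fin_cases j <;> rfl

section Field

variable {K : Type*} [Field K] {x : K}

theorem antidiag_inv_mul_self (hx : x ≠ 0) :
    !![0, x; 1 / x, 0] * !![0, x; 1 / x, 0] = (1 : Matrix (Fin 2) (Fin 2) K) := by
  simp [hx, Matrix.one_fin_two]

theorem eq_algebraMap_add_smul_antidiag_inv (hx : x ≠ 0) (p q : K) :
    !![p, q; q / x ^ 2, p] =
      algebraMap K (Matrix (Fin 2) (Fin 2) K) p + (q / x) • !![0, x; 1 / x, 0] := by
  ext i j
  fin_cases i <;> fin_cases j <;> simp [Matrix.algebraMap_matrix_apply] <;> field_simp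

theorem isSTVB₂Rep_fin_two (hx : x ≠ 0) {a b : K} (hab : a ^ 2 * x ^ 2 - b ^ 2 ≠ 0) (f g : K) :
    IsSTVB₂Rep !![a, b; b / x ^ 2, a] !![0, x; 1 / x, 0] !![f, g; g / x ^ 2, f]
      !![-1, 0; 0, 1] !![1, 0; 0, -1] := by
  have hγ : !![-1, 0; 0, 1] * !![-1, 0; 0, 1] = (1 : Matrix (Fin 2) (Fin 2) K) := by
    simp [Matrix.one_fin_two]
  have hργ : !![0, x; 1 / x, 0] * !![-1, 0; 0, 1] = -(!![-1, 0; 0, 1] * !![0, x; 1 / x, 0]) := by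
    simp
  have hγ₂ : !![1, 0; 0, -1] = -(!![-1, 0; 0, 1] : Matrix (Fin 2) (Fin 2) K) := by
    simp
  have hunit : IsUnit (a ^ 2 - (b / x) ^ 2) := by
    have heq : a ^ 2 - (b / x) ^ 2 = (a ^ 2 * x ^ 2 - b ^ 2) / x ^ 2 := by field_simp
    rw [heq]
    exact (div_ne_zero hab (pow_ne_zero 2 hx)).isUnit
  rw [eq_algebraMap_add_smul_antidiag_inv hx, eq_algebraMap_add_smul_antidiag_inv hx, hγ₂]
  exact isSTVB₂Rep_of_anticommuting_involutions (antidiag_inv_mul_self hx) hγ hργ f (g / x) hunit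

theorem stmt_12_general (hx : x ≠ 0) {a b : K} (hab : a ^ 2 * x ^ 2 - b ^ 2 ≠ 0) (f g : K) :
    IsSTVB₂Rep !![a, b, 0; b / x ^ 2, a, 0; 0, 0, 1] !![0, x, 0; 1 / x, 0, 0; 0, 0, 1]
      !![f, g, 0; g / x ^ 2, f, 0; 0, 0, 1] !![-1, 0, 0; 0, 1, 0; 0, 0, 1]
      !![1, 0, 0; 0, -1, 0; 0, 0, 1] := by
  simpa only [directSumOne_two_one_of] using (isSTVB₂Rep_fin_two hx hab f g).map (directSumOne 2 1)

end Field

/-- The assignment defining the local representation η₁ of STVB₂: the matrices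
S, R, G₁, G₂ are invertible and all defining relations of STVB₂ hold. -/
theorem stmt_12 (a b x f g : ℂ) (hx : x ≠ 0) (hab : a ^ 2 * x ^ 2 - b ^ 2 ≠ 0)
    (S R T G₁ G₂ : Matrix (Fin 3) (Fin 3) ℂ)
    (hS : S = !![a, b, 0; b / x ^ 2, a, 0; 0, 0, 1])
    (hR : R = !![0, x, 0; 1 / x, 0, 0; 0, 0, 1])
    (hT : T = !![f, g, 0; g / x ^ 2, f, 0; 0, 0, 1])
    (hG₁ : G₁ = !![(-1 : ℂ), 0, 0; 0, 1, 0; 0, 0, 1])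
    (hG₂ : G₂ = !![(1 : ℂ), 0, 0; 0, -1, 0; 0, 0, 1]) :
    IsUnit S ∧ IsUnit R ∧ IsUnit G₁ ∧ IsUnit G₂ ∧
    R * R = 1 ∧ G₁ * G₁ = 1 ∧ G₂ * G₂ = 1 ∧
    G₁ * G₂ = G₂ * G₁ ∧ R * G₁ = G₂ * R ∧
    R * S * R = G₂ * G₁ * S * G₁ * G₂ ∧
    S * T = T * S ∧
    R * T * R = G₂ * G₁ * T * G₁ * G₂ := by
  have h : IsSTVB₂Rep S R T G₁ G₂ := by
    simpa only [hS, hR, hT, hG₁, hG₂] using stmt_12_general hx hab f g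
  exact ⟨h.isUnit_σ, .of_mul_eq_one _ h.ρ_mul_self, .of_mul_eq_one _ h.γ₁_mul_self,
    .of_mul_eq_one _ h.γ₂_mul_self, h.ρ_mul_self, h.γ₁_mul_self, h.γ₂_mul_self, h.γ₁_mul_γ₂,
    h.ρ_mul_γ₁, h.ρ_mul_σ_mul_ρ, h.σ_mul_τ, h.ρ_mul_τ_mul_ρ⟩
end

section
/- Let a,b,x,f,g ∈ ℂ with x ≠ 0. Then there is no nonzero vector v ∈ ℂ² that is a simultaneous eigenvector of the five 2×2 complex matrices [[a,b],[b/x²,a]], [[0,x],[1/x,0]], [[f,g],[g/x²,f]], [[−1,0],[0,1]], and [[1,0],[0,−1]]. (These are the 2×2 composition factors of the images of σ₁, ρ₁, τ₁, γ₁, γ₂ under the representation η₁ of STVB₂; hence η₁ is reducible to degree 2 but not further reducible to degree 1.) -/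
/-!
An eigenvector of a diagonal matrix with distinct diagonal entries, such as the image of `γ₁`, spans
a coordinate axis. A matrix that preserves the `j`-th axis has no nonzero off-diagonal entry in its
`j`-th column, whereas the image of `ρ₁` swaps the two axes.
-/

section CommonEigenvector

variable {n R : Type*} [Fintype n] [DecidableEq n] [Semiring R]

theorem eq_single_of_diagonal_mulVec_eq_smul [IsRightCancelMulZero R] {d v : n → R} {μ : R}
    (hd : Function.Injective d) (hv : (Matrix.diagonal d).mulVec v = μ • v) {j : n}
    (hj : v j ≠ 0) : v = Pi.single j (v j) := by
  have eigenvalue_eq {i : n} (hi : v i ≠ 0) : d i = μ :=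
    mul_right_cancel₀ hi (by simpa [Matrix.mulVec_diagonal] using congrFun hv i)
  ext i
  obtain rfl | hij := eq_or_ne i j
  · rw [Pi.single_eq_same]
  · rw [Pi.single_eq_of_ne hij]
    by_contra hi
    exact hij (hd ((eigenvalue_eq hi).trans (eigenvalue_eq hj).symm))

theorem apply_eq_zero_of_mulVec_single_eq_smul_s14 [NoZeroDivisors R] {M : Matrix n n R} {c μ : R}
    {i j : n} (hM : M.mulVec (Pi.single j c) = μ • Pi.single j c) (hc : c ≠ 0) (hij : i ≠ j) :
    M i j = 0 := by
  simpa [hc, hij] using congrFun hM i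

theorem not_exists_common_eigenvector_diagonal [IsRightCancelMulZero R] {M : Matrix n n R}
    {d : n → R} (hM : ∀ j, ∃ i ≠ j, M i j ≠ 0) (hd : Function.Injective d) :
    ¬ ∃ v : n → R, v ≠ 0 ∧
      (∃ μ : R, M.mulVec v = μ • v) ∧ (∃ μ : R, (Matrix.diagonal d).mulVec v = μ • v) := by
  rintro ⟨v, hv, ⟨μ, hMv⟩, ⟨ν, hdv⟩⟩
  obtain ⟨j, hj⟩ := Function.ne_iff.mp hv
  obtain ⟨i, hij, hMij⟩ := hM j
  rw [eq_single_of_diagonal_mulVec_eq_smul hd hdv hj] at hMv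
  exact hMij (apply_eq_zero_of_mulVec_single_eq_smul_s14 hMv hj hij)

end CommonEigenvector

theorem stmt_14_general {K : Type*} [Field K] (hK : ringChar K ≠ 2) {x : K} (hx : x ≠ 0) :
    ¬ ∃ v : Fin 2 → K, v ≠ 0 ∧
      (∃ l : K, (!![0, x; 1 / x, 0]).mulVec v = l • v) ∧
      (∃ l : K, (!![(-1 : K), 0; 0, 1]).mulVec v = l • v) := by
  have antidiagonal_ne_zero (j : Fin 2) : ∃ i ≠ j, !![0, x; 1 / x, 0] i j ≠ 0 :=
    ⟨j.rev, by fin_cases j <;> simp [hx]⟩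
  have diagonal_injective : Function.Injective ![(-1 : K), 1] :=
    injective_pair_iff_ne.mpr (Ring.neg_one_ne_one_of_char_ne_two hK)
  simpa [Matrix.diagonal_fin_two] using
    not_exists_common_eigenvector_diagonal antidiagonal_ne_zero diagonal_injective

/-- The 2×2 composition factors of the images of σ₁, ρ₁, τ₁, γ₁, γ₂ under η₁ have no
common eigenvector, so η₁ is not further reducible to degree 1. -/
theorem stmt_14 (a b x f g : ℂ) (hx : x ≠ 0) :
    ¬ ∃ v : Fin 2 → ℂ, v ≠ 0 ∧
      (∃ l : ℂ, (!![a, b; b / x ^ 2, a]).mulVec v = l • v) ∧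
      (∃ l : ℂ, (!![0, x; 1 / x, 0]).mulVec v = l • v) ∧
      (∃ l : ℂ, (!![f, g; g / x ^ 2, f]).mulVec v = l • v) ∧
      (∃ l : ℂ, (!![(-1 : ℂ), 0; 0, 1]).mulVec v = l • v) ∧
      (∃ l : ℂ, (!![(1 : ℂ), 0; 0, -1]).mulVec v = l • v) :=
  fun ⟨v, hv, _, hρ, _, hγ, _⟩ ↦ stmt_14_general (by simp [ringChar.eq_zero]) hx ⟨v, hv, hρ, hγ⟩
end

section
/- Let b,d,x,f,g,t,u,v ∈ ℂ with x ≠ 0, d²x² − b² ≠ 0, b ≠ 0, and b² − (d−1)²x² ≠ 0, and set S = [[d,b,0],[b/x²,d,0],[0,0,1]] and T = [[f,g,0],[g/x²,f,0],[0,0,1]]. Then t·S + u·S⁻¹ + v·I₃ = T if and only if t = (b²g + x²(b(f−1) − (d−1)dg))/(b³ − b(d−1)²x²), u = −(b−dx)(b+dx)(b(f−1) − dg + g)/(b³ − b(d−1)²x²), and v = (b³f − b²dg − bx²(d(df−2) + f) + d(d²−1)gx²)/(b³ − b(d−1)²x²). (That is, the complex local extension η₁ of ζ₁ to STVB₂ satisfies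 η₁(τ₁) = Φ_{t,u,v}(τ₁) exactly for these values of t, u, v.) -/
/-!
The matrices `S` and `T` lie in the image of the commutative algebra `K[ε]/(ε² - c) × K` with
`c = 1 / x ^ 2`. The inverse of `(d + b ε, 1)` is `(d - b ε, N) / N`, where `N = d ^ 2 - c b ^ 2`,
so comparing coordinates turns the matrix equation into three linear equations in `t`, `u / N`
and `v`. Up to sign, the determinant of this system is
`b (2 d - 1 - N) = b (c b ^ 2 - (d - 1) ^ 2)`.
-/

/-- The matrix of multiplication by `(a + b ε, e)` on `R[ε]/(ε² - c) × R`, acting on row vectors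
in the basis `(1, 0)`, `(ε, 0)`, `(0, 1)`. It puts `ζ₁(σ₁)` and `η₁(τ₁)` in one commutative algebra,
with `c = 1 / x ^ 2`. -/
def quadraticBlock {R : Type*} [CommRing R] (c a b e : R) : Matrix (Fin 3) (Fin 3) R :=
  !![a, b, 0; c * b, a, 0; 0, 0, e]

section CommRing

variable {R : Type*} [CommRing R] (c a b e a' b' e' r : R)

lemma one_eq_quadraticBlock : (1 : Matrix (Fin 3) (Fin 3) R) = quadraticBlock c 1 0 1 := by
  simp [quadraticBlock, Matrix.one_fin_three]

lemma quadraticBlock_add : quadraticBlock c a b e + quadraticBlock c a' b' e' =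
    quadraticBlock c (a + a') (b + b') (e + e') := by
  simp [quadraticBlock, mul_add]

lemma smul_quadraticBlock : r • quadraticBlock c a b e =
    quadraticBlock c (r * a) (r * b) (r * e) := by
  simp [quadraticBlock, Matrix.smul_of, mul_left_comm]

lemma quadraticBlock_mul : quadraticBlock c a b e * quadraticBlock c a' b' e' =
    quadraticBlock c (a * a' + c * (b * b')) (a * b' + b * a') (e * e') := by
  ext i j
  fin_cases i <;> fin_cases j <;>
    simp [quadraticBlock, Matrix.mul_apply, Fin.sum_univ_three] <;> ring

variable {c a b e a' b' e'} in
lemma quadraticBlock_inj : quadraticBlock c a b e = quadraticBlock c a' b' e' ↔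
    a = a' ∧ b = b' ∧ e = e' := by
  refine ⟨fun h ↦ ⟨congr_fun₂ h 0 0, congr_fun₂ h 0 1, congr_fun₂ h 2 2⟩, ?_⟩
  rintro ⟨rfl, rfl, rfl⟩
  rfl

lemma smul_quadraticBlock_add_smul_conj_add_smul_one_eq_iff (m f g h t w v : R) :
    t • quadraticBlock c a b e + w • quadraticBlock c a (-b) m +
        v • (1 : Matrix (Fin 3) (Fin 3) R) = quadraticBlock c f g h ↔
      t * a + w * a + v = f ∧ t * b - w * b = g ∧ t * e + w * m + v = h := by
  simp only [one_eq_quadraticBlock c, smul_quadraticBlock, quadraticBlock_add, quadraticBlock_inj,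
    mul_one, mul_zero, add_zero, mul_neg, ← sub_eq_add_neg]

end CommRing

section Field

variable {K : Type*} [Field K] {c a b e : K}

lemma inv_quadraticBlock (hN : a ^ 2 - c * b ^ 2 ≠ 0) (he : e ≠ 0) :
    (quadraticBlock c a b e)⁻¹ =
      (a ^ 2 - c * b ^ 2)⁻¹ • quadraticBlock c a (-b) ((a ^ 2 - c * b ^ 2) / e) := by
  apply Matrix.inv_eq_right_inv
  rw [Matrix.mul_smul, quadraticBlock_mul, smul_quadraticBlock, one_eq_quadraticBlock c,
    quadraticBlock_inj]
  refine ⟨?_, by ring, ?_⟩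
  · rw [show a * a + c * (b * -b) = a ^ 2 - c * b ^ 2 by ring, inv_mul_cancel₀ hN]
  · rw [mul_div_cancel₀ _ he, inv_mul_cancel₀ hN]

lemma linear_system_iff_eq_div {m f g h t w v : K} (hΔ : b * (2 * a - e - m) ≠ 0) :
    (t * a + w * a + v = f ∧ t * b - w * b = g ∧ t * e + w * m + v = h) ↔
      t = (b * (f - h) + (a - m) * g) / (b * (2 * a - e - m)) ∧
      w = (b * (f - h) - (a - e) * g) / (b * (2 * a - e - m)) ∧
      v = (2 * a * b * h - b * (e + m) * f + a * (m - e) * g) / (b * (2 * a - e - m)) := by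
  simp only [eq_div_iff hΔ]
  constructor
  · rintro ⟨rfl, rfl, rfl⟩
    refine ⟨?_, ?_, ?_⟩ <;> ring
  · rintro ⟨ht, hw, hv⟩
    refine ⟨mul_right_cancel₀ hΔ ?_, mul_right_cancel₀ hΔ ?_, mul_right_cancel₀ hΔ ?_⟩
    · linear_combination a * ht + a * hw + hv
    · linear_combination b * ht - b * hw
    · linear_combination e * ht + m * hw + hv

theorem smul_quadraticBlock_add_smul_inv_add_smul_one_eq_iff {N f g h t u v : K}
    (hN : a ^ 2 - c * b ^ 2 = N) (hN₀ : N ≠ 0) (he : e ≠ 0)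
    (hΔ : b * (2 * a - e - N / e) ≠ 0) :
    t • quadraticBlock c a b e + u • (quadraticBlock c a b e)⁻¹ +
        v • (1 : Matrix (Fin 3) (Fin 3) K) = quadraticBlock c f g h ↔
      t = (b * (f - h) + (a - N / e) * g) / (b * (2 * a - e - N / e)) ∧
      u = (b * (f - h) - (a - e) * g) * N / (b * (2 * a - e - N / e)) ∧
      v = (2 * a * b * h - b * (e + N / e) * f + a * (N / e - e) * g) /
        (b * (2 * a - e - N / e)) := by
  subst hN
  rw [inv_quadraticBlock hN₀ he, smul_smul,
    smul_quadraticBlock_add_smul_conj_add_smul_one_eq_iff, linear_system_iff_eq_div hΔ,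
    ← div_eq_mul_inv, div_eq_iff hN₀, div_mul_eq_mul_div]

end Field

theorem stmt_16_general {K : Type*} [Field K] (b d x f g t u v : K)
    (hx : x ≠ 0) (hbd : d ^ 2 * x ^ 2 - b ^ 2 ≠ 0) (hb : b ≠ 0)
    (hden : b ^ 2 - (d - 1) ^ 2 * x ^ 2 ≠ 0)
    (S T : Matrix (Fin 3) (Fin 3) K)
    (hS : S = !![d, b, 0; b / x ^ 2, d, 0; 0, 0, 1])
    (hT : T = !![f, g, 0; g / x ^ 2, f, 0; 0, 0, 1]) :
    t • S + u • S⁻¹ + v • (1 : Matrix (Fin 3) (Fin 3) K) = T ↔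
      t = (b ^ 2 * g + x ^ 2 * (b * (f - 1) - (d - 1) * d * g)) /
            (b ^ 3 - b * (d - 1) ^ 2 * x ^ 2) ∧
      u = -((b - d * x) * (b + d * x) * (b * (f - 1) - d * g + g)) /
            (b ^ 3 - b * (d - 1) ^ 2 * x ^ 2) ∧
      v = (b ^ 3 * f - b ^ 2 * d * g - b * x ^ 2 * (d * (d * f - 2) + f) +
            d * (d ^ 2 - 1) * g * x ^ 2) /
            (b ^ 3 - b * (d - 1) ^ 2 * x ^ 2) := by
  have hS' : S = quadraticBlock (1 / x ^ 2) d b 1 := by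
    rw [hS, quadraticBlock, one_div_mul_eq_div]
  have hT' : T = quadraticBlock (1 / x ^ 2) f g 1 := by
    rw [hT, quadraticBlock, one_div_mul_eq_div]
  have hN : d ^ 2 - 1 / x ^ 2 * b ^ 2 = (d ^ 2 * x ^ 2 - b ^ 2) / x ^ 2 := by
    field_simp
  have hΔ : b * (2 * d - 1 - (d ^ 2 * x ^ 2 - b ^ 2) / x ^ 2 / 1) =
      (b ^ 3 - b * (d - 1) ^ 2 * x ^ 2) / x ^ 2 := by
    field_simp
    ring
  have hΔ₀ : b ^ 3 - b * (d - 1) ^ 2 * x ^ 2 ≠ 0 := by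
    convert mul_ne_zero hb hden using 1
    ring
  have hx₂ : x ^ 2 ≠ 0 := pow_ne_zero 2 hx
  rw [hS', hT', smul_quadraticBlock_add_smul_inv_add_smul_one_eq_iff hN (div_ne_zero hbd hx₂)
    one_ne_zero (hΔ ▸ div_ne_zero hΔ₀ hx₂), hΔ]
  simp only [div_div_eq_mul_div]
  refine and_congr (Eq.congr_right ?_) (and_congr (Eq.congr_right ?_) (Eq.congr_right ?_))
  all_goals
    congr 1
    field_simp
    ring

/-- The local extension η₁ of ζ₁ to STVB₂ agrees with the Φ-type extension
Φ_{t,u,v} on τ₁ exactly for the stated values of t, u, v. -/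
theorem stmt_16 (b d x f g t u v : ℂ) (hx : x ≠ 0)
    (hbd : d ^ 2 * x ^ 2 - b ^ 2 ≠ 0) (hb : b ≠ 0)
    (hden : b ^ 2 - (d - 1) ^ 2 * x ^ 2 ≠ 0)
    (S T : Matrix (Fin 3) (Fin 3) ℂ)
    (hS : S = !![d, b, 0; b / x ^ 2, d, 0; 0, 0, 1])
    (hT : T = !![f, g, 0; g / x ^ 2, f, 0; 0, 0, 1]) :
    t • S + u • S⁻¹ + v • (1 : Matrix (Fin 3) (Fin 3) ℂ) = T ↔
      t = (b ^ 2 * g + x ^ 2 * (b * (f - 1) - (d - 1) * d * g)) /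
            (b ^ 3 - b * (d - 1) ^ 2 * x ^ 2) ∧
      u = -((b - d * x) * (b + d * x) * (b * (f - 1) - d * g + g)) /
            (b ^ 3 - b * (d - 1) ^ 2 * x ^ 2) ∧
      v = (b ^ 3 * f - b ^ 2 * d * g - b * x ^ 2 * (d * (d * f - 2) + f) +
            d * (d ^ 2 - 1) * g * x ^ 2) /
            (b ^ 3 - b * (d - 1) ^ 2 * x ^ 2) := 
  stmt_16_general b d x f g t u v hx hbd hb hden S T hS hT
end
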